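/- arXiv:2312.15647 — 3 statements merged into one kernel-verified Lean document; each statement's English description precedes it below -/
import Mathlib

section
/- Let (X,d) be a compact metric space, f: X → X a continuous map, μ ∈ M_f(X), and ε > 0. Then the infimum of h_μ(f,ξ) over all finite measurable partitions ξ of X with diam ξ < ε and μ(∂ξ) = 0 equals the infimum of h_μ(f,ξ) over all finite measurable partitions ξ of X with diam ξ < ε, where ∂ξ denotes the union of the topological boundaries of the elements of ξ. -/
open MeasureTheory Filter Set Topology
open scoped ENNReal NNReal

noncomputable section

namespace MMD

variable {X : Type*}

/-! ### Bowen balls, Bowen topological entropy and metric mean dimension -/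

/-- The Bowen ball `B_n(x,ε) = {y | d_n(x,y) < ε}` where `d_n` is the Bowen metric. -/
def bowenBall [PseudoMetricSpace X] (f : X → X) (x : X) (n : ℕ) (ε : ℝ) : Set X :=
  {y | ∀ i < n, dist (f^[i] x) (f^[i] y) < ε}

/-- The weight sum `Σ_{(x,n) ∈ C} exp (-s n)` of a (countable) collection of Bowen balls,
encoded by its set of centers/lengths. -/
def coverSum (s : ℝ) (C : Set (X × ℕ)) : ℝ≥0∞ :=
  ∑' p : C, ENNReal.ofReal (Real.exp (-s * ((p : X × ℕ).2 : ℝ)))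

/-- `m(Z,s,N,ε,f)`: infimum over countable (or finite) covers of `Z` by Bowen balls
`B_{n_i}(x_i,ε)` with `n_i ≥ N` of `Σ exp (-s n_i)`. -/
def mB [PseudoMetricSpace X] (f : X → X) (Z : Set X) (s : ℝ) (N : ℕ) (ε : ℝ) : ℝ≥0∞ :=
  ⨅ (C : Set (X × ℕ)) (_ : C.Countable) (_ : ∀ p ∈ C, N ≤ p.2)
    (_ : Z ⊆ ⋃ p ∈ C, bowenBall f p.1 p.2 ε), coverSum s C

/-- `m(Z,s,ε) = lim_{N→∞} m(Z,s,N,ε,f)`; the limit of this monotone quantity is the sup. -/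
def mBLim [PseudoMetricSpace X] (f : X → X) (Z : Set X) (s : ℝ) (ε : ℝ) : ℝ≥0∞ :=
  ⨆ N : ℕ, mB f Z s N ε

/-- The Bowen topological entropy of `Z` at scale `ε`:
`h_top^B(Z,f,ε) = inf {s | m(Z,s,ε) = 0}`. -/
def hB [PseudoMetricSpace X] (f : X → X) (Z : Set X) (ε : ℝ) : ℝ :=
  sInf {s : ℝ | mBLim f Z s ε = 0}

/-- Upper Bowen metric mean dimension of `Z`. -/
def mdimUpper [PseudoMetricSpace X] (f : X → X) (Z : Set X) : ℝ :=
  limsup (fun ε : ℝ => hB f Z ε / |Real.log ε|) (𝓝[>] (0:ℝ))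

/-- Lower Bowen metric mean dimension of `Z`. -/
def mdimLower [PseudoMetricSpace X] (f : X → X) (Z : Set X) : ℝ :=
  liminf (fun ε : ℝ => hB f Z ε / |Real.log ε|) (𝓝[>] (0:ℝ))

/-! ### Finite measurable partitions and measure-theoretic entropy -/

/-- `P` is a finite measurable partition of `X` (mod `μ`): its elements are measurable,
they cover `X` up to a `μ`-null set, and they pairwise intersect in `μ`-null sets. -/
def IsPartition [MeasurableSpace X] (μ : Measure X) (P : Finset (Set X)) : Prop :=
  (∀ A ∈ P, MeasurableSet A) ∧ μ (Set.univ \ ⋃ A ∈ P, A) = 0 ∧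
    ∀ A ∈ P, ∀ B ∈ P, A ≠ B → μ (A ∩ B) = 0

/-- Static entropy `H_μ(P) = -Σ_{A∈P} μ(A) log μ(A)`. -/
def partEnt [MeasurableSpace X] (μ : Measure X) (P : Finset (Set X)) : ℝ :=
  ∑ A ∈ P, Real.negMulLog ((μ A).toReal)

/-- Join (common refinement) of two finite families of sets. -/
def joinParts (P Q : Finset (Set X)) : Finset (Set X) :=
  letI := Classical.decEq (Set X)
  (P ×ˢ Q).image fun p => p.1 ∩ p.2

/-- `dynJoin f P n = ⋁_{j=0}^{n-1} f^{-j} P`. -/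
def dynJoin (f : X → X) (P : Finset (Set X)) : ℕ → Finset (Set X)
  | 0 => {Set.univ}
  | n + 1 =>
      letI := Classical.decEq (Set X)
      joinParts P ((dynJoin f P n).image fun A => f ⁻¹' A)

/-- Measure-theoretic entropy of `f` w.r.t. the partition `P`:
`h_μ(f,P) = lim_n (1/n) H_μ(⋁_{j<n} f^{-j}P)` (the limit exists, hence equals the `limsup`). -/
def dynEnt [MeasurableSpace X] (μ : Measure X) (f : X → X) (P : Finset (Set X)) : ℝ :=
  limsup (fun n : ℕ => partEnt μ (dynJoin f P n) / n) atTop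

/-- `diam P < ε`, i.e. every element of `P` has diameter `< ε`. -/
def partDiamLt [PseudoMetricSpace X] (P : Finset (Set X)) (ε : ℝ) : Prop :=
  ∀ A ∈ P, Metric.diam A < ε

/-- `inf_{ξ : diam ξ < ε} h_μ(f,ξ)`, the infimum over all finite measurable partitions of `X`
with diameter `< ε`. -/
def infEnt [PseudoMetricSpace X] [MeasurableSpace X] (μ : Measure X) (f : X → X) (ε : ℝ) : ℝ :=
  sInf (dynEnt μ f '' {P : Finset (Set X) | IsPartition μ P ∧ partDiamLt P ε})

/-! ### Empirical measures, generic points and saturated sets -/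

/-- The `n`-th empirical measure `E_n(x) = (1/n) Σ_{j<n} δ_{f^j x}` (defined as `E_1(x)`
for `n = 0`, a junk value). -/
def empMeasure [MeasurableSpace X] (f : X → X) (x : X) (n : ℕ) : Measure X :=
  ((max n 1 : ℕ) : ℝ≥0∞)⁻¹ • ∑ j ∈ Finset.range (max n 1), Measure.dirac (f^[j] x)

instance [MeasurableSpace X] (f : X → X) (x : X) (n : ℕ) :
    IsProbabilityMeasure (empMeasure f x n) := by
  constructor
  have h1 : (0:ℕ) < max n 1 := lt_of_lt_of_le one_pos (le_max_right n 1)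
  have hsum : (∑ j ∈ Finset.range (max n 1), Measure.dirac (f^[j] x)) Set.univ
      = ((max n 1 : ℕ) : ℝ≥0∞) := by
    rw [Measure.finset_sum_apply]
    simp
  simp only [empMeasure, Measure.smul_apply, smul_eq_mul, hsum]
  exact ENNReal.inv_mul_cancel (by exact_mod_cast h1.ne') (by simp)

/-- The `n`-th empirical measure as a probability measure. -/
def empProb [MeasurableSpace X] (f : X → X) (x : X) (n : ℕ) : ProbabilityMeasure X :=
  ⟨empMeasure f x n, inferInstance⟩

/-- `V_f(x)`: the set of weak* limit points of the sequence of empirical measures of `x`. -/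
def Vf [MetricSpace X] [MeasurableSpace X] [BorelSpace X] (f : X → X) (x : X) :
    Set (ProbabilityMeasure X) :=
  {ν | MapClusterPt ν atTop (empProb f x)}

/-- The saturated set `G_K = {x | V_f(x) = K}`. -/
def GK [MetricSpace X] [MeasurableSpace X] [BorelSpace X] (f : X → X)
    (K : Set (ProbabilityMeasure X)) : Set X :=
  {x | Vf f x = K}

/-- The generic set `G_μ = {x | V_f(x) = {μ}}`. -/
def genSet [MetricSpace X] [MeasurableSpace X] [BorelSpace X] (f : X → X)
    (μ : ProbabilityMeasure X) : Set X :=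
  GK f {μ}

/-! ### Invariant measures, supports, measure center, omega-limit sets -/

/-- `μ` is an `f`-invariant (Borel probability) measure. -/
def InvariantProb [MeasurableSpace X] (f : X → X) (μ : ProbabilityMeasure X) : Prop :=
  Measure.map f (μ : Measure X) = (μ : Measure X)

/-- The set `M_f(X)` of invariant probability measures. -/
def invSet [MeasurableSpace X] (f : X → X) : Set (ProbabilityMeasure X) :=
  {μ | InvariantProb f μ}

/-- The support of a measure: points all of whose neighborhoods have positive measure. -/
def measSupport [TopologicalSpace X] [MeasurableSpace X] (μ : Measure X) : Set X :=
  {x | ∀ U ∈ 𝓝 x, 0 < μ U}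

/-- The measure center `C_f(X) = closure (⋃_{μ ∈ M_f(X)} S_μ)`. -/
def measCenter [TopologicalSpace X] [MeasurableSpace X] (f : X → X) : Set X :=
  closure (⋃ μ ∈ invSet f, measSupport (μ : Measure X))

/-- The omega-limit set `ω_f(x) = ⋂_n closure {f^k x : k ≥ n}`. -/
def omegaSet [TopologicalSpace X] (f : X → X) (x : X) : Set X :=
  ⋂ n : ℕ, closure {y | ∃ k, n ≤ k ∧ f^[k] x = y}

/-- The set of points whose omega-limit set contains the measure center. -/
def CtrSet [TopologicalSpace X] [MeasurableSpace X] (f : X → X) : Set X :=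
  {x | measCenter f ⊆ omegaSet f x}

/-! ### Blow-up functions and the g-almost product property -/

/-- A blowup function: nondecreasing, unbounded, `g n < n` and `g n / n → 0`. -/
structure IsBlowup (g : ℕ → ℕ) : Prop where
  mono : Monotone g
  unbounded : ∀ C : ℕ, ∃ n, C < g n
  lt_self : ∀ n, 0 < n → g n < n
  ratio_tendsto_zero : Tendsto (fun n : ℕ => (g n : ℝ) / n) atTop (𝓝 0)

/-- The g-blowup `B_n(g;x,ε)` of the Bowen ball `B_n(x,ε)`. -/
def blowupBall [PseudoMetricSpace X] (f : X → X) (g : ℕ → ℕ) (x : X) (n : ℕ) (ε : ℝ) :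
    Set X :=
  {y | ∃ Λ : Finset ℕ, Λ ⊆ Finset.range n ∧
    letI := Classical.decEq ℕ
    (Finset.range n \ Λ).card ≤ g n ∧ ∀ j ∈ Λ, dist (f^[j] x) (f^[j] y) ≤ ε}

/-- The g-almost product property. -/
def GAlmostProduct [PseudoMetricSpace X] (f : X → X) (g : ℕ → ℕ) : Prop :=
  ∃ m : ℝ → ℕ, (∀ s t : ℝ, 0 < s → s ≤ t → m t ≤ m s) ∧
    ∀ (k : ℕ) (x : ℕ → X) (ε : ℕ → ℝ) (n : ℕ → ℕ),
      (∀ j < k, 0 < ε j) → (∀ j < k, m (ε j) ≤ n j) →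
      (⋂ j ∈ Finset.range k,
        (f^[∑ i ∈ Finset.range j, n i] ⁻¹' blowupBall f g (x j) (n j) (ε j))).Nonempty

/-! ### Separated sets and Pfister–Sullivan quantities -/

/-- The number of times `0 ≤ j < n` at which the orbits of `x` and `y` are `ε`-apart. -/
def sepCount [PseudoMetricSpace X] (f : X → X) (x y : X) (n : ℕ) (ε : ℝ) : ℕ :=
  letI := Classical.decPred fun j : ℕ => ε < dist (f^[j] x) (f^[j] y)
  ((Finset.range n).filter fun j => ε < dist (f^[j] x) (f^[j] y)).card

/-- `N(F; δ, n, ε)`: maximal cardinality of a `(δ,n,ε)`-separated subset of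
`X_{n,F} = {x | E_n(x) ∈ F}`. -/
def NsepD [MetricSpace X] [MeasurableSpace X] [BorelSpace X] (f : X → X)
    (F : Set (ProbabilityMeasure X)) (δ : ℝ) (n : ℕ) (ε : ℝ) : ℕ :=
  sSup {c : ℕ | ∃ E : Finset X, (↑E : Set X) ⊆ {x | empProb f x n ∈ F} ∧
    (∀ x ∈ E, ∀ y ∈ E, x ≠ y → δ * n ≤ (sepCount f x y n ε : ℝ)) ∧ E.card = c}

/-- `N(F; n, ε)`: maximal cardinality of an `(n,ε)`-separated subset of `X_{n,F}`. -/
def NsepP [MetricSpace X] [MeasurableSpace X] [BorelSpace X] (f : X → X)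
    (F : Set (ProbabilityMeasure X)) (n : ℕ) (ε : ℝ) : ℕ :=
  sSup {c : ℕ | ∃ E : Finset X, (↑E : Set X) ⊆ {x | empProb f x n ∈ F} ∧
    (∀ x ∈ E, ∀ y ∈ E, x ≠ y → ∃ i < n, ε < dist (f^[i] x) (f^[i] y)) ∧ E.card = c}

/-- `PS-bar(μ,δ,ε) = inf_{F ∋ μ} limsup_n (1/n) ln N(F;δ,n,ε)`. -/
def PSbar [MetricSpace X] [MeasurableSpace X] [BorelSpace X] (f : X → X)
    (μ : ProbabilityMeasure X) (δ ε : ℝ) : ℝ :=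
  sInf ((fun F => limsup (fun n : ℕ => Real.log (NsepD f F δ n ε) / n) atTop) ''
    {F : Set (ProbabilityMeasure X) | F ∈ 𝓝 μ})

/-! ### Convex combinations of probability measures -/

/-- The convex hull `cov{μ_1,…,μ_m}` of finitely many probability measures. -/
def convexCombos [MeasurableSpace X] {m : ℕ} (μ : Fin m → ProbabilityMeasure X) :
    Set (ProbabilityMeasure X) :=
  {ν | ∃ t : Fin m → ℝ≥0∞, (∑ i, t i) = 1 ∧
    (ν : Measure X) = ∑ i, t i • (μ i : Measure X)}

/-- The convex combination `θ μ + (1-θ) ν` of two probability measures (with `θ`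
clamped into `[0,1]`). -/
def mixP [MeasurableSpace X] (μ ν : ProbabilityMeasure X) (θ : ℝ) : ProbabilityMeasure X :=
  ⟨ENNReal.ofReal (min (max θ 0) 1) • (μ : Measure X)
      + ENNReal.ofReal (1 - min (max θ 0) 1) • (ν : Measure X), by
    constructor
    set t := min (max θ 0) 1 with ht
    have h0 : 0 ≤ t := le_min (le_max_right θ 0) zero_le_one
    have h1 : t ≤ 1 := min_le_right _ _
    rw [Measure.add_apply, Measure.smul_apply, Measure.smul_apply, measure_univ, measure_univ,
      smul_eq_mul, smul_eq_mul, mul_one, mul_one, ← ENNReal.ofReal_add h0 (by linarith)]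
    have : t + (1 - t) = 1 := by ring
    rw [this, ENNReal.ofReal_one]⟩

/-- Condition A.3: for invariant `μ, ν` with `α μ ≠ α ν`, the map
`θ ↦ α(θμ + (1-θ)ν)` is not constant on any nondegenerate subinterval of `[0,1]`. -/
def CondA3 [MeasurableSpace X] (f : X → X) (α : ProbabilityMeasure X → ℝ) : Prop :=
  ∀ μ ∈ invSet f, ∀ ν ∈ invSet f, α μ ≠ α ν →
    ∀ a b : ℝ, 0 ≤ a → a < b → b ≤ 1 →
      ¬ (∀ s ∈ Set.Icc a b, ∀ t ∈ Set.Icc a b, α (mixP μ ν s) = α (mixP μ ν t))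

end MMD

end

open MMD MeasureTheory Filter Set Topology
open scoped ENNReal NNReal

noncomputable section

namespace MMDAux

universe u v

lemma ssa_aux {α β : Type*} [Fintype α] [Fintype β] (p : α → β → ℝ) (hp : ∀ a b, 0 ≤ p a b) :
    ∑ a, ∑ b, Real.negMulLog (p a b) + Real.negMulLog (∑ a, ∑ b, p a b) ≤
      ∑ a, Real.negMulLog (∑ b, p a b) + ∑ b, Real.negMulLog (∑ a, p a b) := by
  set S := ∑ a, ∑ b, p a b with hS
  set r : α → ℝ := fun a => ∑ b, p a b with hr
  set s : β → ℝ := fun b => ∑ a, p a b with hs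
  have hS' : S = ∑ b, s b := by rw [hS, Finset.sum_comm]
  have hr0 : ∀ a, 0 ≤ r a := fun a => Finset.sum_nonneg fun b _ => hp a b
  have hs0 : ∀ b, 0 ≤ s b := fun b => Finset.sum_nonneg fun a _ => hp a b
  have hS0 : 0 ≤ S := Finset.sum_nonneg fun a _ => hr0 a
  have hpr : ∀ a b, p a b ≤ r a := fun a b =>
    Finset.single_le_sum (f := fun b => p a b) (fun b _ => hp a b) (Finset.mem_univ b)
  have hps : ∀ a b, p a b ≤ s b := fun a b =>
    Finset.single_le_sum (f := fun a => p a b) (fun a _ => hp a b) (Finset.mem_univ a)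
  have hrS : ∀ a, r a ≤ S := fun a =>
    Finset.single_le_sum (f := r) (fun a _ => hr0 a) (Finset.mem_univ a)
  have key : ∀ a b, Real.negMulLog (p a b) ≤
      p a b * Real.log S - p a b * Real.log (r a) - p a b * Real.log (s b)
        + (r a * s b / S - p a b) := by
    intro a b
    rcases (hp a b).eq_or_lt with h | h
    · rw [← h]
      have := div_nonneg (mul_nonneg (hr0 a) (hs0 b)) hS0
      simpa using this
    · have h1 : 0 < r a := h.trans_le (hpr a b)
      have h2 : 0 < s b := h.trans_le (hps a b)
      have h3 : 0 < S := h1.trans_le (hrS a)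
      have h4 := Real.log_le_sub_one_of_pos (x := r a * s b / S / p a b) (by positivity)
      rw [Real.log_div (by positivity) h.ne', Real.log_div (by positivity) h3.ne',
        Real.log_mul h1.ne' h2.ne'] at h4
      have h5 := mul_le_mul_of_nonneg_left h4 h.le
      have h6 : p a b * (r a * s b / S / p a b - 1) = r a * s b / S - p a b := by
        field_simp
      rw [h6] at h5
      simp only [Real.negMulLog]
      linarith
  have hsum := Finset.sum_le_sum fun a (_ : a ∈ Finset.univ) =>
    Finset.sum_le_sum fun b (_ : b ∈ Finset.univ) => key a b
  have e1 : ∑ a, ∑ b, p a b * Real.log S = S * Real.log S := by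
    simp_rw [← Finset.sum_mul]; rfl
  have e2 : ∑ a, ∑ b, p a b * Real.log (r a) = ∑ a, r a * Real.log (r a) := by
    simp_rw [← Finset.sum_mul]; rfl
  have e3 : ∑ a, ∑ b, p a b * Real.log (s b) = ∑ b, s b * Real.log (s b) := by
    rw [Finset.sum_comm]
    simp_rw [← Finset.sum_mul]; rfl
  have e4 : ∑ a, ∑ b, r a * s b / S = S := by
    simp_rw [mul_div_assoc, ← Finset.mul_sum, ← Finset.sum_div, ← hS', ← Finset.sum_mul]
    change S * (S / S) = S
    rcases eq_or_ne S 0 with h | h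
    · simp [h]
    · field_simp
  simp only [Finset.sum_add_distrib, Finset.sum_sub_distrib, e1, e2, e3, e4] at hsum
  simp only [Real.negMulLog, neg_mul, Finset.sum_neg_distrib] at hsum ⊢
  linarith

variable {X : Type*} [MeasurableSpace X]

def Ms {ι : Type*} (φ : X → ι) : Prop := ∀ i, MeasurableSet (φ ⁻¹' {i})

def H {ι : Type*} [Fintype ι] (μ : Measure X) (φ : X → ι) : ℝ :=
  ∑ i, Real.negMulLog (μ.real (φ ⁻¹' {i}))

lemma Ms.prod {ι κ : Type*} {φ : X → ι} {ψ : X → κ} (h : Ms φ) (h' : Ms ψ) :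
    Ms (fun x => (φ x, ψ x)) := by
  rintro ⟨i, j⟩
  have : (fun x => (φ x, ψ x)) ⁻¹' {(i, j)} = φ ⁻¹' {i} ∩ ψ ⁻¹' {j} := by
    ext x; simp
  rw [this]
  exact (h i).inter (h' j)

lemma marg {ι κ : Type*} [Fintype κ] (μ : Measure X) [IsFiniteMeasure μ] {φ : X → ι} {ψ : X → κ}
    (h : Ms φ) (h' : Ms ψ) (i : ι) :
    μ.real (φ ⁻¹' {i}) = ∑ j, μ.real (φ ⁻¹' {i} ∩ ψ ⁻¹' {j}) := by
  rw [← measureReal_iUnion_fintype]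
  · congr 1
    ext x; simp
  · intro j k hjk
    refine Set.disjoint_left.2 ?_
    rintro x ⟨_, hx⟩ ⟨_, hx'⟩
    exact hjk (hx.symm.trans hx')
  · exact fun j => (h i).inter (h' j)

lemma ssa {α β γ : Type*} [Fintype α] [Fintype β] [Fintype γ] (μ : Measure X) [IsFiniteMeasure μ]
    {a : X → α} {b : X → β} {c : X → γ} (ha : Ms a) (hb : Ms b) (hc : Ms c) :
    H μ (fun x => (a x, b x, c x)) + H μ c ≤ H μ (fun x => (a x, c x)) + H μ (fun x => (b x, c x)) := by
  have h1 : H μ (fun x => (a x, b x, c x)) =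
      ∑ k, ∑ i, ∑ j, Real.negMulLog (μ.real (a ⁻¹' {i} ∩ b ⁻¹' {j} ∩ c ⁻¹' {k})) := by
    unfold H
    rw [Fintype.sum_prod_type, Finset.sum_comm]
    rw [Fintype.sum_prod_type, Finset.sum_comm]
    refine Finset.sum_congr rfl fun k _ => ?_
    rw [Finset.sum_comm]
    refine Finset.sum_congr rfl fun i _ => Finset.sum_congr rfl fun j _ => ?_
    congr 2
    ext x; simp [and_assoc]
  have h2 : H μ (fun x => (a x, c x)) =
      ∑ k, ∑ i, Real.negMulLog (∑ j, μ.real (a ⁻¹' {i} ∩ b ⁻¹' {j} ∩ c ⁻¹' {k})) := by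
    unfold H
    rw [Fintype.sum_prod_type, Finset.sum_comm]
    refine Finset.sum_congr rfl fun k _ => Finset.sum_congr rfl fun i _ => ?_
    rw [marg μ (ha.prod hc) hb]
    congr 1
    refine Finset.sum_congr rfl fun j _ => ?_
    congr 1
    ext x; simp; tauto
  have h3 : H μ (fun x => (b x, c x)) =
      ∑ k, ∑ j, Real.negMulLog (∑ i, μ.real (a ⁻¹' {i} ∩ b ⁻¹' {j} ∩ c ⁻¹' {k})) := by
    unfold H
    rw [Fintype.sum_prod_type, Finset.sum_comm]
    refine Finset.sum_congr rfl fun k _ => Finset.sum_congr rfl fun i _ => ?_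
    rw [marg μ (hb.prod hc) ha]
    congr 1
    refine Finset.sum_congr rfl fun j _ => ?_
    congr 1
    ext x; simp; tauto
  have h4 : H μ c =
      ∑ k, Real.negMulLog (∑ i, ∑ j, μ.real (a ⁻¹' {i} ∩ b ⁻¹' {j} ∩ c ⁻¹' {k})) := by
    unfold H
    refine Finset.sum_congr rfl fun k _ => ?_
    rw [marg μ hc (ha.prod hb), Fintype.sum_prod_type]
    congr 1
    refine Finset.sum_congr rfl fun i _ => Finset.sum_congr rfl fun j _ => ?_
    congr 1
    ext x; simp; tauto
  rw [h1, h2, h3, h4, ← Finset.sum_add_distrib, ← Finset.sum_add_distrib]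
  exact Finset.sum_le_sum fun k _ => ssa_aux _ fun _ _ => measureReal_nonneg

lemma H_equiv {ι κ : Type*} [Fintype ι] [Fintype κ] (μ : Measure X) (e : ι ≃ κ) (φ : X → ι) :
    H μ (fun x => e (φ x)) = H μ φ := by
  unfold H
  refine (Fintype.sum_equiv e _ _ fun i => ?_).symm
  congr 2
  ext x; simp

lemma H_comp {ι : Type*} [Fintype ι] {μ : Measure X} {f : X → X} (hf : MeasurePreserving f μ μ)
    {φ : X → ι} (h : Ms φ) : H μ (fun x => φ (f x)) = H μ φ := by
  unfold H
  refine Finset.sum_congr rfl fun i _ => ?_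
  congr 1
  exact hf.measureReal_preimage (h i).nullMeasurableSet

lemma Ms.comp {ι : Type*} {f : X → X} (hf : Measurable f) {φ : X → ι} (h : Ms φ) :
    Ms (fun x => φ (f x)) := fun i => hf (h i)

lemma negMulLog_sum_le {α : Type*} [Fintype α] (p : α → ℝ) (hp : ∀ a, 0 ≤ p a) :
    Real.negMulLog (∑ a, p a) ≤ ∑ a, Real.negMulLog (p a) := by
  set S := ∑ a, p a with hS
  have : Real.negMulLog S = ∑ a, -(p a * Real.log S) := by
    rw [Finset.sum_neg_distrib, ← Finset.sum_mul, ← hS, Real.negMulLog]; ring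
  rw [this]
  refine Finset.sum_le_sum fun a _ => ?_
  rw [Real.negMulLog, neg_mul, neg_le_neg_iff]
  rcases (hp a).eq_or_lt with h | h
  · simp [← h]
  · exact mul_le_mul_of_nonneg_left (Real.log_le_log h
      (Finset.single_le_sum (f := p) (fun b _ => hp b) (Finset.mem_univ a))) h.le

lemma H_mono {ι κ : Type*} [Fintype ι] [Fintype κ] (μ : Measure X) [IsFiniteMeasure μ]
    {φ : X → ι} {ψ : X → κ} (h : Ms φ) (h' : Ms ψ) :
    H μ φ ≤ H μ (fun x => (φ x, ψ x)) := by
  unfold H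
  rw [Fintype.sum_prod_type]
  refine Finset.sum_le_sum fun i _ => ?_
  rw [marg μ h h']
  refine (negMulLog_sum_le _ fun _ => measureReal_nonneg).trans_eq ?_
  refine Finset.sum_congr rfl fun j _ => ?_
  congr 2
  ext x; simp

/-- The step inequality. -/
lemma H_step {α β γ δ : Type*} [Fintype α] [Fintype β] [Fintype γ] [Fintype δ] {μ : Measure X}
    [IsFiniteMeasure μ] {f : X → X} (hf : MeasurePreserving f μ μ)
    {a : X → α} {A : X → β} {q : X → γ} {p : X → δ} (ha : Ms a) (hA : Ms A) (hq : Ms q)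
    (hp : Ms p) :
    H μ (fun x => ((a x, q (f x)), (A x, p (f x)))) ≤ H μ (fun x => (A x, p (f x))) +
      (H μ (fun x => (a x, A x)) - H μ A) + (H μ (fun x => (q x, p x)) - H μ p) := by
  have hq' := hq.comp hf.measurable
  have hp' := hp.comp hf.measurable
  have s1 := ssa μ ha hq' (hA.prod hp')
  have s2 := ssa μ ha hp' hA
  have s3 := ssa μ hq' hA hp'
  have e1 := H_equiv μ (Equiv.prodAssoc α γ (β × δ)) (fun x => ((a x, q (f x)), (A x, p (f x))))
  have e2 := H_equiv μ (Equiv.prodCongr (Equiv.refl α) (Equiv.prodComm β δ))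
    (fun x => (a x, (A x, p (f x))))
  have e3 := H_equiv μ (Equiv.prodComm β δ) (fun x => (A x, p (f x)))
  have e4 := H_comp hf hp
  have e5 := H_comp hf (hq.prod hp)
  simp at e1 e2 e3 e4 e5
  linarith

def Rep {ι : Type*} (μ : Measure X) (P : Finset (Set X)) (φ : X → ι) (s : ι → Set X) : Prop :=
  Ms φ ∧ (∀ i, s i =ᵐ[μ] φ ⁻¹' {i}) ∧ ∀ A, A ∈ P ↔ ∃ i, s i = A

lemma Rep.partEnt_eq {ι : Type*} [Fintype ι] {μ : Measure X} {P : Finset (Set X)} {φ : X → ι}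
    {s : ι → Set X} (h : Rep μ P φ s) : partEnt μ P = H μ φ := by
  classical
  have hP : P = Finset.univ.image s := by
    ext A; simp [h.2.2 A]
  unfold partEnt H
  rw [hP, Finset.sum_image_of_pairwise_eq_zero]
  · refine Finset.sum_congr rfl fun i _ => ?_
    rw [measure_congr (h.2.1 i)]; rfl
  · intro i _ j _ hij hs
    have h1 : (s i ∩ s j : Set X) =ᵐ[μ] (φ ⁻¹' {i} ∩ φ ⁻¹' {j} : Set X) :=
      (h.2.1 i).inter (h.2.1 j)
    have h2 : (φ ⁻¹' {i} ∩ φ ⁻¹' {j} : Set X) = ∅ := by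
      ext x; simp only [mem_inter_iff, mem_preimage, mem_singleton_iff, mem_empty_iff_false,
        iff_false]
      rintro ⟨rfl, h⟩; exact hij h
    rw [h2, ← hs, inter_self] at h1
    simp [measure_congr h1]

lemma Rep.step {ι κ : Type*} {μ : Measure X} {f : X → X} (hf : MeasurePreserving f μ μ)
    {P : Finset (Set X)} {n : ℕ} {φ : X → ι} {s : ι → Set X} {ψ : X → κ} {t : κ → Set X}
    (h : Rep μ P φ s) (h' : Rep μ (dynJoin f P n) ψ t) :
    Rep μ (dynJoin f P (n + 1)) (fun x => (φ x, ψ (f x))) (fun k => s k.1 ∩ f ⁻¹' t k.2) := by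
  refine ⟨h.1.prod (h'.1.comp hf.measurable), ?_, ?_⟩
  · rintro ⟨i, j⟩
    have h1 : (fun x => (φ x, ψ (f x))) ⁻¹' {(i, j)} = φ ⁻¹' {i} ∩ f ⁻¹' (ψ ⁻¹' {j}) := by
      ext x; simp
    rw [h1]
    exact (h.2.1 i).inter (hf.quasiMeasurePreserving.preimage_ae_eq (h'.2.1 j))
  · intro A
    simp only [dynJoin, joinParts, Finset.mem_image, Finset.mem_product, Prod.exists]
    constructor
    · rintro ⟨B, C, ⟨hB, D, hD, rfl⟩, rfl⟩
      obtain ⟨i, rfl⟩ := (h.2.2 _).1 hB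
      obtain ⟨j, rfl⟩ := (h'.2.2 _).1 hD
      exact ⟨i, j, rfl⟩
    · rintro ⟨i, j, rfl⟩
      exact ⟨s i, _, ⟨(h.2.2 _).2 ⟨i, rfl⟩, t j, (h'.2.2 _).2 ⟨j, rfl⟩, rfl⟩, rfl⟩

lemma Rep.triv (μ : Measure X) : Rep μ {Set.univ} (fun _ => PUnit.unit) (fun _ => Set.univ) := by
  refine ⟨fun i => by simp, fun i => by simp, fun A => ?_⟩
  simp [eq_comm]

lemma H_triv (μ : Measure X) [IsProbabilityMeasure μ] :
    H μ (fun _ : X => PUnit.unit) = 0 := by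
  simp [H]

lemma exists_rep {ι : Type u} {κ : Type v} [Fintype ι] [Fintype κ] {μ : Measure X} [IsProbabilityMeasure μ]
    {f : X → X} (hf : MeasurePreserving f μ μ) {P Q : Finset (Set X)}
    {φ : X → ι} {s : ι → Set X} {ψ : X → κ} {t : κ → Set X}
    (hP : Rep μ P φ s) (hQ : Rep μ Q ψ t) (n : ℕ) :
    partEnt μ (dynJoin f Q n) ≤ partEnt μ (dynJoin f P n) +
      n * (H μ (fun x => (ψ x, φ x)) - H μ φ) := by
  suffices h : ∃ (ι' : Type u) (κ' : Type v) (_ : Fintype ι') (_ : Fintype κ') (φ' : X → ι')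
      (s' : ι' → Set X) (ψ' : X → κ') (t' : κ' → Set X), Rep μ (dynJoin f P n) φ' s' ∧
      Rep μ (dynJoin f Q n) ψ' t' ∧ H μ (fun x => (ψ' x, φ' x)) ≤ H μ φ' +
        n * (H μ (fun x => (ψ x, φ x)) - H μ φ) by
    obtain ⟨ι', κ', _, _, φ', s', ψ', t', h1, h2, h3⟩ := h
    rw [h1.partEnt_eq, h2.partEnt_eq]
    exact (H_mono μ h2.1 h1.1).trans h3
  induction n with
  | zero =>
    refine ⟨PUnit, PUnit, inferInstance, inferInstance, _, _, _, _, Rep.triv μ, Rep.triv μ, ?_⟩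
    simp [H]
  | succ n ih =>
    obtain ⟨ι', κ', _, _, φ', s', ψ', t', h1, h2, h3⟩ := ih
    refine ⟨ι × ι', κ × κ', inferInstance, inferInstance, _, _, _, _, hP.step hf h1,
      hQ.step hf h2, ?_⟩
    have := H_step hf hQ.1 hP.1 h2.1 h1.1
    push_cast
    linarith

lemma H_nonneg {ι : Type*} [Fintype ι] (μ : Measure X) [IsProbabilityMeasure μ] (φ : X → ι) :
    0 ≤ H μ φ :=
  Finset.sum_nonneg fun _ _ => Real.negMulLog_nonneg measureReal_nonneg measureReal_le_one

lemma partEnt_nonneg (μ : Measure X) [IsProbabilityMeasure μ] (P : Finset (Set X)) :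
    0 ≤ partEnt μ P :=
  Finset.sum_nonneg fun A _ => Real.negMulLog_nonneg measureReal_nonneg
    (measureReal_le_one (μ := μ) (s := A))

lemma dynJoin_triv {X : Type*} (f : X → X) (n : ℕ) : dynJoin f {Set.univ} n = {Set.univ} := by
  induction n with
  | zero => rfl
  | succ n ih => ext A; simp [dynJoin, joinParts, ih]

lemma partEnt_bound {ι : Type*} [Fintype ι] {μ : Measure X} [IsProbabilityMeasure μ]
    {f : X → X} (hf : MeasurePreserving f μ μ) {P : Finset (Set X)}
    {φ : X → ι} {s : ι → Set X} (hP : Rep μ P φ s) :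
    ∃ C, ∀ n : ℕ, partEnt μ (dynJoin f P n) / n ≤ C := by
  have := exists_rep hf (Rep.triv.{_, 0} μ) hP
  refine ⟨|H μ (fun x => (φ x, PUnit.unit.{1}))|, fun n => ?_⟩
  have h := this n
  rw [dynJoin_triv, H_triv] at h
  have h0 : partEnt μ ({Set.univ} : Finset (Set X)) = 0 := by simp [partEnt]
  rw [h0, zero_add, sub_zero] at h
  rcases Nat.eq_zero_or_pos n with rfl | hn
  · simp
  · rw [div_le_iff₀ (by positivity)]
    refine h.trans ?_
    rw [mul_comm]
    gcongr
    exact le_abs_self _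

lemma dynEnt_le {ι κ : Type*} [Fintype ι] [Fintype κ] {μ : Measure X} [IsProbabilityMeasure μ]
    {f : X → X} (hf : MeasurePreserving f μ μ) {P Q : Finset (Set X)}
    {φ : X → ι} {s : ι → Set X} {ψ : X → κ} {t : κ → Set X}
    (hP : Rep μ P φ s) (hQ : Rep μ Q ψ t) :
    dynEnt μ f Q ≤ dynEnt μ f P + (H μ (fun x => (ψ x, φ x)) - H μ φ) := by
  obtain ⟨C, hC⟩ := partEnt_bound hf hP
  have b1 : IsBoundedUnder (· ≤ ·) atTop (fun n : ℕ => partEnt μ (dynJoin f P n) / n) :=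
    isBoundedUnder_of ⟨C, hC⟩
  have b0 : ∀ R : Finset (Set X), IsCoboundedUnder (· ≤ ·) atTop
      (fun n : ℕ => partEnt μ (dynJoin f R n) / n) := fun R =>
    (isBoundedUnder_of (r := (· ≥ ·)) ⟨0, fun n =>
      div_nonneg (partEnt_nonneg μ _) (Nat.cast_nonneg n)⟩).isCoboundedUnder_le
  unfold dynEnt
  rw [← limsup_add_const _ _ _ b1 (b0 P)]
  refine limsup_le_limsup ?_ (b0 Q) ?_
  · filter_upwards [eventually_gt_atTop 0] with n hn
    have h := exists_rep hf hP hQ n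
    have hn' : (0 : ℝ) < n := by exact_mod_cast hn
    rw [div_add' _ _ _ hn'.ne', div_le_div_iff_of_pos_right hn']
    linarith
  · exact isBoundedUnder_of ⟨C + (H μ (fun x => (ψ x, φ x)) - H μ φ), fun n => by
      have := hC n
      linarith⟩

lemma dynEnt_nonneg {ι : Type*} [Fintype ι] {μ : Measure X} [IsProbabilityMeasure μ]
    {f : X → X} (hf : MeasurePreserving f μ μ) {P : Finset (Set X)}
    {φ : X → ι} {s : ι → Set X} (hP : Rep μ P φ s) : 0 ≤ dynEnt μ f P := by
  obtain ⟨C, hC⟩ := partEnt_bound hf hP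
  exact le_limsup_of_frequently_le (Frequently.of_forall fun n =>
      div_nonneg (partEnt_nonneg μ _) (Nat.cast_nonneg n)) (isBoundedUnder_of ⟨C, hC⟩)

/-- Every partition mod zero is represented by a map. -/
lemma exists_map {μ : Measure X} [IsProbabilityMeasure μ] {P : Finset (Set X)}
    (hP : IsPartition μ P) : ∃ φ : X → {A // A ∈ P}, Rep μ P φ Subtype.val := by
  classical
  obtain ⟨hm, hc, hd⟩ := hP
  have hne : P.Nonempty := by
    by_contra h
    rw [Finset.not_nonempty_iff_eq_empty] at h
    simp [h] at hc
  obtain ⟨A0, hA0⟩ := hne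
  set N : Set X := (Set.univ \ ⋃ A ∈ P, A) ∪
    ⋃ A ∈ P, ⋃ B ∈ P, ⋃ (_ : A ≠ B), A ∩ B with hN
  have hN0 : μ N = 0 := by
    rw [hN, measure_union_null_iff]
    refine ⟨hc, ?_⟩
    refine (measure_biUnion_null_iff P.countable_toSet).2 fun A hA => ?_
    refine (measure_biUnion_null_iff P.countable_toSet).2 fun B hB => ?_
    rw [measure_iUnion_null_iff]
    exact hd A hA B hB
  have hNm : MeasurableSet N := by
    refine (MeasurableSet.univ.diff (Finset.measurableSet_biUnion _ hm)).union ?_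
    refine Finset.measurableSet_biUnion _ fun A hA => Finset.measurableSet_biUnion _ fun B hB =>
      MeasurableSet.iUnion fun _ => (hm A hA).inter (hm B hB)
  have hex : ∀ x, x ∉ N → ∃ A : {A // A ∈ P}, x ∈ A.1 := by
    intro x hx
    simp only [hN, mem_union, not_or] at hx
    simpa using hx.1
  have huniq : ∀ x, x ∉ N → ∀ A B : {A // A ∈ P}, x ∈ A.1 → x ∈ B.1 → A = B := by
    intro x hx A B hA hB
    by_contra hAB
    refine hx (Or.inr ?_)
    simp only [mem_iUnion]
    exact ⟨A.1, A.2, B.1, B.2, fun h => hAB (Subtype.ext h), hA, hB⟩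
  let φ : X → {A // A ∈ P} := fun x => if h : x ∉ N then (hex x h).choose else ⟨A0, hA0⟩
  have hφ : ∀ x, x ∉ N → ∀ A : {A // A ∈ P}, φ x = A ↔ x ∈ A.1 := by
    intro x hx A
    have h1 : x ∈ (φ x).1 := by
      simp only [φ, dif_pos hx]
      exact (hex x hx).choose_spec
    constructor
    · rintro rfl; exact h1
    · intro h; exact huniq x hx _ _ h1 h
  have hφ' : ∀ x, x ∈ N → φ x = ⟨A0, hA0⟩ := by
    intro x hx
    simp [φ, hx]
  refine ⟨φ, ?_, ?_, ?_⟩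
  · intro A
    have : φ ⁻¹' {A} = (A.1 \ N) ∪ (if A = ⟨A0, hA0⟩ then N else ∅) := by
      ext x
      by_cases hx : x ∈ N
      · simp only [mem_preimage, mem_singleton_iff, hφ' x hx, mem_union, Set.mem_sdiff, hx]
        split_ifs with h <;> simp [h, hx, eq_comm]
      · simp only [mem_preimage, mem_singleton_iff, hφ x hx, mem_union, Set.mem_sdiff, hx]
        split_ifs with h <;> simp [hx]
    rw [this]
    refine ((hm _ A.2).diff hNm).union ?_
    split_ifs
    exacts [hNm, MeasurableSet.empty]
  · intro A
    have : ∀ᵐ x ∂μ, x ∉ N := measure_eq_zero_iff_ae_notMem.1 hN0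
    filter_upwards [this] with x hx
    exact propext (hφ x hx A).symm
  · intro A; simp

end MMDAux

namespace MMDAux

lemma exists_fiber_map {X κ : Type*} {E : κ → Set X} (hd : ∀ i j, i ≠ j → Disjoint (E i) (E j))
    (hc : ∀ x, ∃ k, x ∈ E k) : ∃ ψ : X → κ, ∀ k, ψ ⁻¹' {k} = E k := by
  choose ψ hψ using hc
  refine ⟨ψ, fun k => ?_⟩
  ext x
  simp only [mem_preimage, mem_singleton_iff]
  constructor
  · rintro rfl; exact hψ x
  · intro h
    by_contra hk
    exact Set.disjoint_left.1 (hd _ _ hk) (hψ x) h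

variable {X : Type*} [MetricSpace X] [CompactSpace X] [MeasurableSpace X] [BorelSpace X]

/-- A finite cover by small open sets with null frontier. -/
lemma exists_cover (μ : Measure X) [IsProbabilityMeasure μ] {ε : ℝ} (hε : 0 < ε) :
    ∃ (m : ℕ) (B : Fin m → Set X), (∀ j, IsOpen (B j)) ∧ (∀ j, μ (frontier (B j)) = 0) ∧
      (∀ j, Metric.diam (B j) < ε) ∧ ∀ x, ∃ j, x ∈ B j := by
  have h1 : ∀ x : X, ∃ r ∈ Ioo 0 (ε / 3), μ (frontier (Metric.thickening r {x})) = 0 := fun x =>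
    exists_null_frontier_thickening μ {x} (by positivity)
  choose r hr hr0 using h1
  obtain ⟨t, ht⟩ := isCompact_univ.elim_finite_subcover (fun x => Metric.thickening (r x) {x})
    (fun x => Metric.isOpen_thickening) (fun x _ => mem_iUnion.2 ⟨x, by
      simpa [Metric.thickening_singleton] using (hr x).1⟩)
  refine ⟨t.card, fun j => Metric.thickening (r (t.equivFin.symm j)) {(t.equivFin.symm j : X)},
    fun j => Metric.isOpen_thickening, fun j => hr0 _, fun j => ?_, fun x => ?_⟩
  · have h2 := Metric.diam_thickening_le {(t.equivFin.symm j : X)} (hr (t.equivFin.symm j)).1.le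
    have h3 := (hr (t.equivFin.symm j)).2
    rw [Metric.diam_singleton] at h2
    linarith
  · have := ht (mem_univ x)
    simp only [mem_iUnion] at this
    obtain ⟨y, hy, hx⟩ := this
    exact ⟨t.equivFin ⟨y, hy⟩, by simpa using hx⟩

/-- Disjoint open neighbourhoods of compact sets with null frontiers and small diameters. -/
lemma exists_nhds (μ : Measure X) [IsProbabilityMeasure μ] {ε : ℝ} {ι : Type*}
    [Finite ι] {K : ι → Set X} (hK : ∀ i, IsCompact (K i))
    (hd : ∀ i j, i ≠ j → Disjoint (K i) (K j)) (hdiam : ∀ i, Metric.diam (K i) < ε) :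
    ∃ U : ι → Set X, (∀ i, IsOpen (U i)) ∧ (∀ i, K i ⊆ U i) ∧ (∀ i, μ (frontier (U i)) = 0) ∧
      (∀ i, Metric.diam (U i) < ε) ∧ ∀ i j, i ≠ j → Disjoint (U i) (U j) := by
  have h1 : ∀ᶠ δ in 𝓝[>] (0 : ℝ), ∀ i j, i ≠ j →
      Disjoint (Metric.thickening δ (K i)) (Metric.thickening δ (K j)) := by
    refine eventually_all.2 fun i => eventually_all.2 fun j => ?_
    by_cases hij : i = j
    · simp [hij]
    obtain ⟨δ, hδ, h⟩ := (hd i j hij).exists_thickenings (hK i) (hK j).isClosed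
    filter_upwards [Ioo_mem_nhdsGT hδ] with δ' hδ' _
    exact h.mono (Metric.thickening_mono hδ'.2.le _) (Metric.thickening_mono hδ'.2.le _)
  have h2 : ∀ᶠ δ in 𝓝[>] (0 : ℝ), ∀ i, Metric.diam (K i) + 2 * δ < ε := by
    refine eventually_all.2 fun i => ?_
    have : (0 : ℝ) < (ε - Metric.diam (K i)) / 2 := by linarith [hdiam i]
    filter_upwards [Ioo_mem_nhdsGT this] with δ' hδ'
    linarith [hδ'.2]
  obtain ⟨δ, ⟨hδ1, hδ2⟩, hδ⟩ := ((h1.and h2).and self_mem_nhdsWithin).exists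
  have h3 : ∀ i, ∃ r ∈ Ioo 0 δ, μ (frontier (Metric.thickening r (K i))) = 0 := fun i =>
    exists_null_frontier_thickening μ (K i) hδ
  choose r hr hr0 using h3
  refine ⟨fun i => Metric.thickening (r i) (K i), fun i => Metric.isOpen_thickening,
    fun i => Metric.self_subset_thickening (hr i).1 _, hr0, fun i => ?_, fun i j hij => ?_⟩
  · have := Metric.diam_thickening_le (K i) (hr i).1.le
    linarith [hδ2 i, (hr i).2]
  · exact (hδ1 i j hij).mono (Metric.thickening_mono (hr i).2.le _)
      (Metric.thickening_mono (hr j).2.le _)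

lemma frontier_diff_null {μ : Measure X} {s t : Set X} (hs : μ (frontier s) = 0)
    (ht : μ (frontier t) = 0) : μ (frontier (s \ t)) = 0 := by
  rw [sdiff_eq]
  refine measure_mono_null (frontier_inter_subset _ _) ?_
  rw [frontier_compl]
  exact measure_union_null (measure_mono_null inter_subset_left hs)
    (measure_mono_null inter_subset_right ht)

lemma frontier_iUnion_null {μ : Measure X} {ι : Type*} [Finite ι] {s : ι → Set X}
    (hs : ∀ i, μ (frontier (s i)) = 0) : μ (frontier (⋃ i, s i)) = 0 := by
  refine measure_mono_null (t := ⋃ i, frontier (s i)) ?_ (measure_iUnion_null hs)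
  intro x hx
  rw [frontier, closure_iUnion_of_finite] at hx
  obtain ⟨i, hi⟩ := mem_iUnion.1 hx.1
  exact mem_iUnion.2 ⟨i, hi, fun h => hx.2 (interior_mono (subset_iUnion s i) h)⟩

lemma construct {μ : Measure X} [IsProbabilityMeasure μ] {ε : ℝ} (hε : 0 < ε)
    {P : Finset (Set X)} (hP : IsPartition μ P) (hdP : partDiamLt P ε)
    {φ : X → {A // A ∈ P}} (hφ : Rep μ P φ Subtype.val) {c : ℝ} (hc : 0 < c) :
    ∃ (m : ℕ) (Q : Finset (Set X)) (ψ : X → {A // A ∈ P} ⊕ Fin m)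
      (t : {A // A ∈ P} ⊕ Fin m → Set X), Rep μ Q ψ t ∧ IsPartition μ Q ∧ partDiamLt Q ε ∧
      μ (⋃ A ∈ Q, frontier A) = 0 ∧ H μ (fun x => (ψ x, φ x)) < H μ φ + c := by
  classical
  obtain ⟨m, B, hBo, hBf, hBd, hBc⟩ := exists_cover μ hε
  let y : ({A // A ∈ P} ⊕ Fin m) × {A // A ∈ P} → ℝ := fun p =>
    if p.1 = Sum.inl p.2 then μ.real (φ ⁻¹' {p.2}) else 0
  have hy : ∑ p, Real.negMulLog (y p) = H μ φ := by
    rw [Fintype.sum_prod_type, Finset.sum_comm]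
    unfold H
    refine Finset.sum_congr rfl fun A _ => ?_
    simp [y, apply_ite Real.negMulLog]
  have hcont : Continuous (fun z : ({A // A ∈ P} ⊕ Fin m) × {A // A ∈ P} → ℝ =>
      ∑ p, Real.negMulLog (z p)) :=
    continuous_finsetSum _ fun p _ => Real.continuous_negMulLog.comp (continuous_apply p)
  have hev : ∀ᶠ z in 𝓝 y, ∑ p, Real.negMulLog (z p) < H μ φ + c :=
    hcont.continuousAt.eventually (gt_mem_nhds (by
      change ∑ p, Real.negMulLog (y p) < _
      rw [hy]; linarith))
  obtain ⟨η, hη, hηy⟩ := Metric.eventually_nhds_iff.1 hev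
  -- compact sets
  have hKex : ∀ A : {A // A ∈ P}, ∃ K ⊆ φ ⁻¹' {A} ∩ A.1, IsCompact K ∧
      μ ((φ ⁻¹' {A} ∩ A.1) \ K) < ENNReal.ofReal η := fun A =>
    ((hφ.1 A).inter (hP.1 _ A.2)).exists_isCompact_sdiff_lt (measure_ne_top _ _)
      (by simpa using hη)
  choose K hKs hKc hKμ using hKex
  have hKφ : ∀ A, μ.real (φ ⁻¹' {A} \ K A) < η := by
    intro A
    have h1 : (φ ⁻¹' {A} \ K A : Set X) =ᵐ[μ] ((φ ⁻¹' {A} ∩ A.1) \ K A : Set X) := by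
      filter_upwards [hφ.2.1 A] with x hx
      apply propext
      have hx' : x ∈ A.1 ↔ x ∈ φ ⁻¹' {A} := iff_of_eq hx
      change (x ∈ φ ⁻¹' {A} ∧ x ∉ K A) ↔ ((x ∈ φ ⁻¹' {A} ∧ x ∈ A.1) ∧ x ∉ K A)
      tauto
    rw [measureReal_congr h1]
    exact (ENNReal.lt_ofReal_iff_toReal_lt (measure_ne_top _ _)).1 (hKμ A)
  have hKd : ∀ A A', A ≠ A' → Disjoint (K A) (K A') := by
    intro A A' h
    refine Set.disjoint_left.2 fun x hx hx' => h ?_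
    exact (hKs A hx).1.symm.trans (hKs A' hx').1
  obtain ⟨U, hUo, hKU, hUf, hUd, hUdisj⟩ := exists_nhds μ hKc hKd (ε := ε) (fun A =>
    (Metric.diam_mono ((hKs A).trans inter_subset_right)
      (Metric.isBounded_of_compactSpace)).trans_lt (hdP _ A.2))
  let V : Set X := ⋃ A, U A
  let E : {A // A ∈ P} ⊕ Fin m → Set X :=
    Sum.elim U (fun j => (B j \ ⋃ i : {i : Fin m // i < j}, B i) \ V)
  have hEm : ∀ k, MeasurableSet (E k) := by
    rintro (A | j)
    · exact (hUo A).measurableSet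
    · exact ((hBo j).measurableSet.diff (MeasurableSet.iUnion fun i : {i : Fin m // i < j} =>
        (hBo i).measurableSet)).diff (MeasurableSet.iUnion fun A => (hUo A).measurableSet)
  have hEf : ∀ k, μ (frontier (E k)) = 0 := by
    rintro (A | j)
    · exact hUf A
    · exact frontier_diff_null (frontier_diff_null (hBf j)
        (frontier_iUnion_null fun i => hBf i)) (frontier_iUnion_null hUf)
  have hEd : ∀ k, Metric.diam (E k) < ε := by
    rintro (A | j)
    · exact hUd A
    · exact (Metric.diam_mono (sdiff_subset.trans sdiff_subset)
        Metric.isBounded_of_compactSpace).trans_lt (hBd j)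
  have hUV : ∀ A j, Disjoint (E (Sum.inl A)) (E (Sum.inr j)) := fun A j =>
    Set.disjoint_left.2 fun x hx hx' => hx'.2 (mem_iUnion.2 ⟨A, hx⟩)
  have hBB : ∀ i j : Fin m, i < j → Disjoint (E (Sum.inr i)) (E (Sum.inr j)) := fun i j hij =>
    Set.disjoint_left.2 fun x hx hx' => hx'.1.2 (mem_iUnion.2 ⟨⟨i, hij⟩, hx.1.1⟩)
  have hEdisj : ∀ k l, k ≠ l → Disjoint (E k) (E l) := by
    rintro (A | i) (A' | j) h
    · exact hUdisj A A' fun h' => h (by rw [h'])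
    · exact hUV A j
    · exact (hUV A' i).symm
    · rcases lt_trichotomy i j with h' | h' | h'
      · exact hBB i j h'
      · exact absurd (by rw [h']) h
      · exact (hBB j i h').symm
  have hEc : ∀ x, ∃ k, x ∈ E k := by
    intro x
    by_cases hx : x ∈ V
    · obtain ⟨A, hA⟩ := mem_iUnion.1 hx
      exact ⟨Sum.inl A, hA⟩
    · have hne : (Finset.univ.filter fun j => x ∈ B j).Nonempty := by
        obtain ⟨j, hj⟩ := hBc x
        exact ⟨j, by simpa using hj⟩
      obtain ⟨j, hj, hmin⟩ := Finset.exists_min_image _ id hne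
      refine ⟨Sum.inr j, ⟨by simpa using hj, ?_⟩, hx⟩
      intro h
      obtain ⟨⟨i, hi⟩, hxi⟩ := mem_iUnion.1 h
      exact absurd (hmin i (by simpa using hxi)) (not_le.2 hi)
  obtain ⟨ψ, hψ⟩ := exists_fiber_map hEdisj hEc
  refine ⟨m, Finset.univ.image E, ψ, E, ⟨fun k => by rw [hψ]; exact hEm k,
    fun k => by rw [hψ]; exact EventuallyEq.rfl, fun A => by simp⟩, ⟨?_, ?_, ?_⟩, ?_, ?_, ?_⟩
  · intro A hA
    obtain ⟨k, -, rfl⟩ := Finset.mem_image.1 hA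
    exact hEm k
  · have : (Set.univ \ ⋃ A ∈ Finset.univ.image E, A) = ∅ := by
      rw [sdiff_eq_empty]
      intro x _
      obtain ⟨k, hk⟩ := hEc x
      simp only [mem_iUnion]
      exact ⟨E k, Finset.mem_image_of_mem _ (Finset.mem_univ k), hk⟩
    rw [this, measure_empty]
  · intro A hA A' hA' h
    obtain ⟨k, -, rfl⟩ := Finset.mem_image.1 hA
    obtain ⟨l, -, rfl⟩ := Finset.mem_image.1 hA'
    rw [(hEdisj k l fun h' => h (by rw [h'])).inter_eq, measure_empty]
  · intro A hA
    obtain ⟨k, -, rfl⟩ := Finset.mem_image.1 hA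
    exact hEd k
  · refine (measure_biUnion_null_iff (Finset.countable_toSet _)).2 fun A hA => ?_
    obtain ⟨k, -, rfl⟩ := Finset.mem_image.1 hA
    exact hEf k
  · refine hηy ?_
    rw [dist_pi_lt_iff hη]
    rintro ⟨k, A⟩
    have hpre : (fun x => (ψ x, φ x)) ⁻¹' {(k, A)} = E k ∩ φ ⁻¹' {A} := by
      rw [← hψ k]; ext x; simp
    rw [hpre, Real.dist_eq]
    by_cases hk : k = Sum.inl A
    · subst hk
      have h1 : μ.real (φ ⁻¹' {A}) = μ.real (E (Sum.inl A) ∩ φ ⁻¹' {A}) +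
          μ.real (φ ⁻¹' {A} \ E (Sum.inl A)) := by
        rw [inter_comm, measureReal_inter_add_sdiff (hEm _)]
      have h2 : μ.real (φ ⁻¹' {A} \ E (Sum.inl A)) ≤ μ.real (φ ⁻¹' {A} \ K A) :=
        measureReal_mono (sdiff_subset_sdiff_right (hKU A))
      have h3 : (0 : ℝ) ≤ μ.real (φ ⁻¹' {A} \ E (Sum.inl A)) := measureReal_nonneg
      simp only [y, if_true]
      rw [abs_lt]
      constructor <;> linarith [hKφ A]
    · simp only [y, if_neg hk, sub_zero, abs_of_nonneg measureReal_nonneg]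
      refine lt_of_le_of_lt (measureReal_mono ?_) (hKφ A)
      rintro x ⟨hx, hx'⟩
      exact ⟨hx', fun hxK => Set.disjoint_left.1 (hEdisj _ _ hk) hx (hKU A hxK)⟩

end MMDAux

theorem stmt8 {X : Type*} [MetricSpace X] [CompactSpace X] [Nonempty X]
    [MeasurableSpace X] [BorelSpace X]
    (f : X → X) (hf : Continuous f) (μ : ProbabilityMeasure X) (hμ : InvariantProb f μ)
    (ε : ℝ) (hε : 0 < ε) :
    sInf (dynEnt (μ : Measure X) f '' {P : Finset (Set X) | IsPartition (μ : Measure X) P ∧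
        partDiamLt P ε ∧ (μ : Measure X) (⋃ A ∈ P, frontier A) = 0}) =
    sInf (dynEnt (μ : Measure X) f '' {P : Finset (Set X) | IsPartition (μ : Measure X) P ∧
        partDiamLt P ε}) := by
  have hmp : MeasurePreserving f (μ : Measure X) (μ : Measure X) := ⟨hf.measurable, hμ⟩
  set S := {P : Finset (Set X) | IsPartition (μ : Measure X) P ∧
        partDiamLt P ε ∧ (μ : Measure X) (⋃ A ∈ P, frontier A) = 0} with hS
  set T := {P : Finset (Set X) | IsPartition (μ : Measure X) P ∧ partDiamLt P ε} with hT
  have hST : S ⊆ T := fun P hP => ⟨hP.1, hP.2.1⟩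
  have hbT : BddBelow (dynEnt (μ : Measure X) f '' T) := by
    refine ⟨0, ?_⟩
    rintro _ ⟨P, hP, rfl⟩
    obtain ⟨φ, hφ⟩ := MMDAux.exists_map hP.1
    exact MMDAux.dynEnt_nonneg hmp hφ
  have hbS : BddBelow (dynEnt (μ : Measure X) f '' S) := hbT.mono (image_mono hST)
  have key : ∀ P ∈ T, ∀ c : ℝ, 0 < c → ∃ Q ∈ S,
      dynEnt (μ : Measure X) f Q ≤ dynEnt (μ : Measure X) f P + c := by
    intro P hP c hc
    obtain ⟨φ, hφ⟩ := MMDAux.exists_map hP.1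
    obtain ⟨m, Q, ψ, t, h1, h2, h3, h4, h5⟩ := MMDAux.construct hε hP.1 hP.2 hφ hc
    refine ⟨Q, ⟨h2, h3, h4⟩, ?_⟩
    have := MMDAux.dynEnt_le hmp hφ h1
    linarith
  rcases T.eq_empty_or_nonempty with h | hne
  · have hS0 : S = ∅ := subset_empty_iff.1 (h ▸ hST)
    rw [h, hS0]
  obtain ⟨P0, hP0⟩ := hne
  obtain ⟨Q0, hQ0, -⟩ := key P0 hP0 1 one_pos
  refine le_antisymm ?_ ?_
  · refine le_csInf ⟨_, mem_image_of_mem _ hP0⟩ ?_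
    rintro _ ⟨P, hP, rfl⟩
    refine le_of_forall_pos_le_add fun c hc => ?_
    obtain ⟨Q, hQ, h⟩ := key P hP c hc
    exact (csInf_le hbS (mem_image_of_mem _ hQ)).trans h
  · exact csInf_le_csInf hbT ⟨_, mem_image_of_mem _ hQ0⟩ (image_mono hST)

end
end

section
/- Let (X,d) be a compact metric space, f: X → X a continuous map, and ε > 0. For each n ∈ ℕ let E_n be a nonempty finite (n,ε)-separated subset of X and set ν_n = (1/(n·#E_n)) Σ_{x∈E_n} Σ_{k=0}^{n-1} δ_{f^k x}. If ν_n converges in the weak* topology to a measure μ (which is then f-invariant), then limsup_{n→∞} (1/n) ln #E_n ≤ inf_{ξ: diam ξ < ε} h_μ(f,ξ), where the infimum is over all finite measurable partitions ξ of X with diam ξ < ε. -/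
open MeasureTheory Filter Set Topology
open scoped ENNReal NNReal

open MMD MeasureTheory Filter Set Topology
open scoped ENNReal NNReal

noncomputable section

/-! ### Helper lemmas -/

theorem aux_gibbs {α Ω : Type*} [Fintype Ω] (E : Finset α) (φ : α → Ω)
    (hφ : Set.InjOn φ (E : Set α)) (Q : Ω → ℝ) (hQ : ∀ w, 0 < Q w) (hs : ∑ w, Q w ≤ 1) :
    (E.card : ℝ) * Real.log E.card ≤ ∑ x ∈ E, -Real.log (Q (φ x)) := by
  classical
  rcases E.eq_empty_or_nonempty with rfl | hE
  · simp
  have hc : (0 : ℝ) < E.card := by exact_mod_cast hE.card_pos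
  have h1 : ∀ x ∈ E, Real.log E.card + Real.log (Q (φ x)) ≤ E.card * Q (φ x) - 1 := by
    intro x _
    rw [← Real.log_mul hc.ne' (hQ _).ne']
    exact Real.log_le_sub_one_of_pos (mul_pos hc (hQ _))
  have h2 := Finset.sum_le_sum h1
  rw [Finset.sum_add_distrib, Finset.sum_sub_distrib, ← Finset.mul_sum] at h2
  simp only [Finset.sum_const, nsmul_eq_mul, mul_one] at h2
  have h3 : ∑ x ∈ E, Q (φ x) ≤ 1 := by
    rw [← Finset.sum_image (f := Q) hφ]
    exact (Finset.sum_le_sum_of_subset_of_nonneg (Finset.subset_univ _)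
      (fun w _ _ => (hQ w).le)).trans hs
  rw [Finset.sum_neg_distrib]
  nlinarith

theorem aux_sum_blocks (q T : ℕ) (F : ℕ → ℝ) :
    ∑ r ∈ Finset.range q, ∑ t ∈ Finset.range T, F (r + t * q)
      = ∑ j ∈ Finset.range (T * q), F j := by
  rw [Finset.sum_comm]
  induction T with
  | zero => simp
  | succ T ih =>
    rw [Finset.sum_range_succ, ih, Nat.succ_mul, Finset.sum_range_add]
    congr 1
    exact Finset.sum_congr rfl fun r _ => by rw [add_comm]

theorem aux_coding {X ι : Type*} [Fintype ι] [Nonempty ι] (f : X → X) (ζ : X → ι)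
    (q : ℕ) (hq : 0 < q) (p : (Fin q → ι) → ℝ) (hp : ∀ w, 0 < p w) (hs : ∑ w, p w ≤ 1)
    (M : ℝ) (hM : ∀ w, -Real.log (p w) ≤ M) (n : ℕ) (E : Finset X)
    (hE : ∀ x ∈ E, ∀ y ∈ E, x ≠ y → ∃ i < n, ζ (f^[i] x) ≠ ζ (f^[i] y)) :
    (q : ℝ) * (E.card * Real.log E.card) ≤
      (∑ x ∈ E, ∑ j ∈ Finset.range n, -Real.log (p (fun i => ζ (f^[(i : ℕ)] (f^[j] x)))))
        + E.card * (q * (q * Real.log (Fintype.card ι)) + q * M) := by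
  classical
  set g : X → ℝ := fun y => -Real.log (p (fun i => ζ (f^[(i : ℕ)] y))) with hg
  have hp1 : ∀ w, p w ≤ 1 := fun w =>
    (Finset.single_le_sum (fun w _ => (hp w).le) (Finset.mem_univ w)).trans hs
  have hg0 : ∀ y, 0 ≤ g y := fun y => by
    simp only [hg]
    linarith [Real.log_nonpos (hp (fun i => ζ (f^[(i : ℕ)] y))).le (hp1 _)]
  have hgM : ∀ y, g y ≤ M := fun y => hM _
  have hc : (0 : ℝ) < Fintype.card ι := by exact_mod_cast Fintype.card_pos
  have hlc : 0 ≤ Real.log (Fintype.card ι) :=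
    Real.log_nonneg (by exact_mod_cast Fintype.card_pos (α := ι))
  obtain ⟨T, hT1, hT2⟩ : ∃ T, n ≤ T * q ∧ T * q ≤ n + q := by
    refine ⟨n / q + 1, ?_, ?_⟩
    · have := Nat.lt_div_mul_add (a := n) hq
      rw [add_mul, one_mul]; omega
    · have := Nat.div_mul_le_self n q
      rw [add_mul, one_mul]; omega
  have key : ∀ r ∈ Finset.range q, (E.card : ℝ) * Real.log E.card ≤
      ∑ x ∈ E, (q * Real.log (Fintype.card ι) +
        ∑ t ∈ Finset.range T, g (f^[r + t * q] x)) := by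
    intro r hr
    have hrq : r < q := Finset.mem_range.1 hr
    have := aux_gibbs E
      (fun x => ((fun i : Fin r => ζ (f^[(i : ℕ)] x)),
        (fun (t : Fin T) (i : Fin q) => ζ (f^[(i : ℕ)] (f^[r + t * q] x)))))
      (by
        intro x hx y hy hxy
        by_contra hne
        obtain ⟨i, hi, hne'⟩ := hE x hx y hy hne
        apply hne'
        simp only [Prod.mk.injEq] at hxy
        by_cases hir : i < r
        · exact congrFun hxy.1 ⟨i, hir⟩
        · have hd : (i - r) / q < T := by
            rw [Nat.div_lt_iff_lt_mul hq]; omega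
          have h3 := congrFun (congrFun hxy.2 ⟨(i - r) / q, hd⟩)
            ⟨(i - r) % q, Nat.mod_lt _ hq⟩
          simp only [← Function.iterate_add_apply] at h3
          have h4 : (i - r) % q + (r + (i - r) / q * q) = i := by
            have := Nat.mod_add_div' (i - r) q
            omega
          rwa [h4] at h3)
      (fun w => ((Fintype.card ι : ℝ)⁻¹) ^ r * ∏ t, p (w.2 t))
      (fun w => mul_pos (pow_pos (inv_pos.2 hc) _) (Finset.prod_pos fun t _ => hp _))
      (by
        rw [Fintype.sum_prod_type]
        simp only [← Finset.mul_sum]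
        have : ∑ b : Fin T → (Fin q → ι), ∏ t, p (b t) = (∑ w, p w) ^ T := by
          rw [Finset.sum_pow', ← Fintype.piFinset_univ]
        rw [this, Finset.sum_const, nsmul_eq_mul, ← mul_assoc]
        simp only [Finset.card_univ, Fintype.card_fun, Fintype.card_fin]
        push_cast
        rw [← mul_pow, inv_mul_cancel₀ hc.ne', one_pow, one_mul]
        exact pow_le_one₀ (Finset.sum_nonneg fun w _ => (hp w).le) hs)
    refine this.trans (Finset.sum_le_sum fun x _ => ?_)
    rw [Real.log_mul (pow_pos (inv_pos.2 hc) _).ne' (Finset.prod_pos fun t _ => hp _).ne',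
      Real.log_pow, Real.log_inv, Real.log_prod (fun t _ => (hp _).ne'), Finset.sum_range]
    simp only [hg, Finset.sum_neg_distrib]
    have : (r : ℝ) * Real.log (Fintype.card ι) ≤ q * Real.log (Fintype.card ι) :=
      mul_le_mul_of_nonneg_right (by exact_mod_cast hrq.le) hlc
    linarith
  have h2 := Finset.sum_le_sum key
  rw [Finset.sum_const, Finset.card_range, nsmul_eq_mul, Finset.sum_comm] at h2
  refine h2.trans ?_
  rw [← nsmul_eq_mul (E.card), ← Finset.sum_const, ← Finset.sum_add_distrib]
  refine Finset.sum_le_sum fun x _ => ?_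
  rw [Finset.sum_add_distrib, Finset.sum_const, Finset.card_range, nsmul_eq_mul,
    aux_sum_blocks q T (fun j => g (f^[j] x))]
  obtain ⟨s, hs'⟩ := Nat.exists_eq_add_of_le hT1
  have hsq : s ≤ q := by omega
  rw [hs', Finset.sum_range_add]
  have h5 : ∑ k ∈ Finset.range s, g (f^[n + k] x) ≤ q * M := by
    have hM0 : 0 ≤ M := (hg0 x).trans (hgM x)
    calc _ ≤ ∑ k ∈ Finset.range s, M := Finset.sum_le_sum fun k _ => hgM _
      _ = s * M := by simp
      _ ≤ q * M := mul_le_mul_of_nonneg_right (by exact_mod_cast hsq) hM0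
  linarith

/-- The cylinder set of a word. -/
def auxCyl {X ι : Type*} (f : X → X) (A : ι → Set X) {q : ℕ} (v : Fin q → ι) : Set X :=
  {x | ∀ j : Fin q, f^[(j : ℕ)] x ∈ A (v j)}

theorem aux_dynJoin {X : Type*} (f : X → X) (P : Finset (Set X)) (n : ℕ) [DecidableEq (Set X)] :
    dynJoin f P n = Finset.univ.image
      (fun v : Fin n → P => auxCyl f (fun i : P => (i : Set X)) v) := by
  induction n with
  | zero =>
    ext B
    simp only [dynJoin, auxCyl, Finset.mem_singleton, Finset.mem_image, Finset.mem_univ, true_and]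
    constructor
    · rintro rfl
      exact ⟨fun i => i.elim0, by ext x; simp⟩
    · rintro ⟨v, rfl⟩
      ext x; simp
  | succ n ih =>
    ext B
    simp only [dynJoin, joinParts, ih, Finset.mem_image, Finset.mem_product, Finset.mem_univ,
      true_and, Prod.exists]
    constructor
    · rintro ⟨A, C, ⟨hA, D, ⟨v, rfl⟩, rfl⟩, rfl⟩
      refine ⟨Fin.cons ⟨A, hA⟩ v, ?_⟩
      ext x
      simp [auxCyl, Fin.forall_fin_succ]
    · rintro ⟨v, rfl⟩
      refine ⟨v 0, f ⁻¹' (auxCyl f (fun i : P => (i : Set X)) (Fin.tail v)),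
        ⟨(v 0).2, _, ⟨Fin.tail v, rfl⟩, rfl⟩, ?_⟩
      ext x
      simp [auxCyl, Fin.forall_fin_succ, Fin.tail]

theorem aux_integral {X : Type*} [MetricSpace X] [MeasurableSpace X] [BorelSpace X]
    (f : X → X) (E : Finset X) (n : ℕ) (ψ : X → ℝ) (hψ : Continuous ψ) :
    ∫ x, ψ x ∂(((n * E.card : ℕ) : ℝ≥0∞)⁻¹ •
          ∑ x ∈ E, ∑ k ∈ Finset.range n, Measure.dirac (f^[k] x))
      = ((n : ℝ) * E.card)⁻¹ * ∑ x ∈ E, ∑ k ∈ Finset.range n, ψ (f^[k] x) := by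
  have hi : ∀ y, Integrable ψ (Measure.dirac y) := fun y =>
    integrable_dirac' hψ.stronglyMeasurable enorm_lt_top
  rw [integral_smul_measure, integral_finsetSum_measure]
  · simp only [smul_eq_mul, ENNReal.toReal_inv, ENNReal.toReal_natCast, Nat.cast_mul]
    congr 1
    refine Finset.sum_congr rfl fun x _ => ?_
    rw [integral_finsetSum_measure (fun k _ => hi _)]
    exact Finset.sum_congr rfl fun k _ => integral_dirac' _ _ hψ.stronglyMeasurable
  · intro x _
    rw [integrable_finsetSum_measure]
    exact fun k _ => hi _

theorem aux_invariant {X : Type*} [MetricSpace X] [CompactSpace X]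
    [MeasurableSpace X] [BorelSpace X]
    (f : X → X) (hf : Continuous f)
    (E : ℕ → Finset X) (μ : ProbabilityMeasure X)
    (hconv : ∀ ψ : C(X, ℝ), Tendsto (fun n : ℕ =>
        ∫ x, ψ x ∂(((n * (E n).card : ℕ) : ℝ≥0∞)⁻¹ •
          ∑ x ∈ E n, ∑ k ∈ Finset.range n, Measure.dirac (f^[k] x))) atTop
        (𝓝 (∫ x, ψ x ∂(μ : Measure X)))) :
    MeasurePreserving f (μ : Measure X) (μ : Measure X) := by
  refine ⟨hf.measurable, ?_⟩
  haveI : IsProbabilityMeasure (Measure.map f (μ : Measure X)) :=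
    Measure.isProbabilityMeasure_map hf.measurable.aemeasurable
  refine ext_of_forall_integral_eq_of_IsFiniteMeasure fun ψ => ?_
  rw [integral_map hf.measurable.aemeasurable ψ.continuous.aestronglyMeasurable]
  have h1 := hconv ⟨fun x => ψ (f x), ψ.continuous.comp hf⟩
  have h2 := hconv ⟨fun x => ψ x, ψ.continuous⟩
  have h3 := h1.sub h2
  simp only [ContinuousMap.coe_mk] at h3
  refine sub_eq_zero.1 (tendsto_nhds_unique h3 ?_)
  have h4 : Tendsto (fun n : ℕ => (2 * ‖ψ‖) / (n : ℝ)) atTop (𝓝 0) :=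
    tendsto_const_div_atTop_nhds_zero_nat _
  refine squeeze_zero_norm (fun n => ?_) h4
  rw [aux_integral f _ _ (fun x => ψ (f x)) (ψ.continuous.comp hf), aux_integral f _ _ _ ψ.continuous,
    ← mul_sub, ← Finset.sum_sub_distrib]
  have h5 : ∀ x ∈ E n, ‖∑ k ∈ Finset.range n, ψ (f (f^[k] x)) - ∑ k ∈ Finset.range n, ψ (f^[k] x)‖
      ≤ 2 * ‖ψ‖ := by
    intro x _
    rw [← Finset.sum_sub_distrib]
    have := Finset.sum_range_sub (fun k => ψ (f^[k] x)) n
    simp only [Function.iterate_succ_apply'] at this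
    rw [this, two_mul]
    exact (norm_sub_le _ _).trans (add_le_add (ψ.norm_coe_le_norm _) (ψ.norm_coe_le_norm _))
  rw [norm_mul]
  have h6 := norm_sum_le_of_le _ h5
  rw [Finset.sum_const, nsmul_eq_mul] at h6
  refine (mul_le_mul_of_nonneg_left h6 (norm_nonneg _)).trans ?_
  rw [norm_inv, Real.norm_of_nonneg (by positivity)]
  rcases (E n).eq_empty_or_nonempty with h | h
  · rw [h]; simp; positivity
  · have hc : (0 : ℝ) < (E n).card := by exact_mod_cast h.card_pos
    rw [mul_inv, mul_assoc, inv_mul_cancel_left₀ hc.ne', div_eq_inv_mul]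

theorem aux_cyl_measurable {X ι : Type*} [MeasurableSpace X] (f : X → X) (hf : Measurable f)
    (A : ι → Set X) (hA : ∀ i, MeasurableSet (A i)) {q : ℕ} (v : Fin q → ι) :
    MeasurableSet (auxCyl f A v) := by
  have : auxCyl f A v = ⋂ j : Fin q, f^[(j : ℕ)] ⁻¹' A (v j) := by ext; simp [auxCyl]
  rw [this]
  exact MeasurableSet.iInter fun j => (hf.iterate _) (hA _)

theorem aux_cyl_inter_null {X ι : Type*} [MeasurableSpace X] (μ : Measure X) (f : X → X)
    (hf : MeasurePreserving f μ μ) (A : ι → Set X) (hA : ∀ i, MeasurableSet (A i))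
    (hd : ∀ i j, i ≠ j → μ (A i ∩ A j) = 0) {q : ℕ}
    (v u : Fin q → ι) (h : v ≠ u) :
    μ (auxCyl f A v ∩ auxCyl f A u) = 0 := by
  obtain ⟨j, hj⟩ := Function.ne_iff.1 h
  have h1 := hd _ _ hj
  rw [← (hf.iterate j).measure_preimage ((hA _).inter (hA _)).nullMeasurableSet] at h1
  refine measure_mono_null ?_ h1
  intro x hx
  exact ⟨hx.1 j, hx.2 j⟩

theorem aux_partEnt {X : Type*} [MeasurableSpace X] (μ : Measure X) (f : X → X)
    (hf : MeasurePreserving f μ μ) (P : Finset (Set X)) (hP : IsPartition μ P) (q : ℕ) :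
    partEnt μ (dynJoin f P q) = ∑ v : Fin q → P,
      Real.negMulLog (μ.real (auxCyl f (fun i : P => (i : Set X)) v)) := by
  classical
  rw [aux_dynJoin, partEnt, Finset.sum_image_of_pairwise_eq_zero]
  · rfl
  · intro v _ u _ hvu he
    have := aux_cyl_inter_null μ f hf (fun i : P => (i : Set X)) (fun i => hP.1 _ i.2)
      (fun i j h => hP.2.2 _ i.2 _ j.2 (fun h' => h (Subtype.ext h'))) v u hvu
    rw [← he, inter_self] at this
    rw [this]; simp

theorem aux_cyl_sum {X ι : Type*} [Fintype ι] [MeasurableSpace X] (μ : Measure X)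
    [IsProbabilityMeasure μ] (f : X → X)
    (hf : MeasurePreserving f μ μ) (A : ι → Set X) (hA : ∀ i, MeasurableSet (A i))
    (hd : ∀ i j, i ≠ j → μ (A i ∩ A j) = 0) (q : ℕ) :
    ∑ v : Fin q → ι, μ.real (auxCyl f A v) ≤ 1 := by
  have := sum_measure_le_measure_univ (μ := μ) (s := Finset.univ)
    (t := fun v : Fin q → ι => auxCyl f A v)
    (fun v _ => (aux_cyl_measurable f hf.measurable _ hA v).nullMeasurableSet)
    (fun v _ u _ h => aux_cyl_inter_null μ f hf A hA hd v u h)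
  rw [measure_univ] at this
  have h2 := ENNReal.toReal_mono ENNReal.one_ne_top this
  rwa [ENNReal.toReal_sum (fun _ _ => measure_ne_top _ _), ENNReal.toReal_one] at h2

theorem aux_partEnt_le {X : Type*} [MeasurableSpace X] (μ : Measure X) [IsProbabilityMeasure μ]
    (f : X → X)
    (hf : MeasurePreserving f μ μ) (P : Finset (Set X)) (hP : IsPartition μ P) (q : ℕ) :
    partEnt μ (dynJoin f P q) ≤ q * Real.log (P.card + 1) + 1 := by
  rw [aux_partEnt μ f hf P hP]
  set p : (Fin q → P) → ℝ := fun v => μ.real (auxCyl f (fun i : P => (i : Set X)) v) with hp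
  have hp1 : ∑ v, p v ≤ 1 := aux_cyl_sum μ f hf (fun i : P => (i : Set X)) (fun i => hP.1 _ i.2)
      (fun i j h => hP.2.2 _ i.2 _ j.2 (fun h' => h (Subtype.ext h'))) q
  have hp0 : ∀ v, 0 ≤ p v := fun v => measureReal_nonneg
  set a : ℝ := P.card + 1 with ha
  have ha1 : 1 ≤ a := by simp [ha]
  have ha0 : 0 < a := by linarith
  have hla : 0 ≤ Real.log a := Real.log_nonneg ha1
  have hu : 0 < (a ^ q)⁻¹ := by positivity
  have h1 : ∀ v ∈ Finset.univ, Real.negMulLog (p v) ≤ p v * (q * Real.log a) + (a ^ q)⁻¹ := by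
    intro v _
    rcases (hp0 v).eq_or_lt with h | h
    · rw [← h]; simp; positivity
    · have h2 := Real.log_le_sub_one_of_pos (div_pos hu h)
      rw [Real.log_div hu.ne' h.ne', Real.log_inv, Real.log_pow] at h2
      have h3 := mul_le_mul_of_nonneg_left h2 h.le
      have h4 : p v * ((a ^ q)⁻¹ / p v - 1) = (a ^ q)⁻¹ - p v := by field_simp
      rw [h4] at h3
      rw [Real.negMulLog]
      nlinarith
  refine (Finset.sum_le_sum h1).trans ?_
  rw [Finset.sum_add_distrib, ← Finset.sum_mul, Finset.sum_const, nsmul_eq_mul]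
  have h5 : (Finset.univ : Finset (Fin q → P)).card * (a ^ q)⁻¹ ≤ 1 := by
    simp only [Finset.card_univ, Fintype.card_fun, Fintype.card_fin, Fintype.card_coe]
    rw [← div_eq_mul_inv, div_le_one (by positivity)]
    push_cast
    exact pow_le_pow_left₀ (by positivity) (by simp [ha]) _
  have h6 : 0 ≤ q * Real.log a := by positivity
  nlinarith

/-- Continuous majorant: closed cylinders in open cylinders. -/
theorem aux_majorant {X κ ι : Type*} [MetricSpace X] [CompactSpace X]
    [MeasurableSpace X] [BorelSpace X] [Fintype κ] (μ : Measure X) [IsProbabilityMeasure μ]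
    (f : X → X) (hf : MeasurePreserving f μ μ) (hfc : Continuous f)
    (K V : κ → Set X) (hK : ∀ i, IsClosed (K i)) (hV : ∀ i, IsOpen (V i))
    (hKV : ∀ i, K i ⊆ V i) (hd : ∀ i j, i ≠ j → Disjoint (V i) (V j))
    (δ : ℝ) (hKδ : μ.real (⋃ i, K i)ᶜ ≤ δ) (ζ : X → ι) (e : κ → ι)
    (hζ : ∀ i, ∀ x ∈ V i, ζ x = e i) (q : ℕ) (g : (Fin q → ι) → ℝ) (M : ℝ)
    (hM : ∀ w, g w ≤ M) (hM0 : 0 ≤ M) :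
    ∃ ψ : C(X, ℝ), (∀ x, g (fun i => ζ (f^[(i : ℕ)] x)) ≤ ψ x) ∧
      ∫ x, ψ x ∂μ ≤ (∑ v : Fin q → κ, g (fun i => e (v i)) * μ.real (auxCyl f K v))
        + M * (q * δ) := by
  classical
  have hKm : ∀ i, MeasurableSet (K i) := fun i => (hK i).measurableSet
  have hcl : ∀ v : Fin q → κ, IsClosed (auxCyl f K v) := fun v => by
    have : auxCyl f K v = ⋂ j : Fin q, f^[(j : ℕ)] ⁻¹' K (v j) := by ext; simp [auxCyl]
    rw [this]
    exact isClosed_iInter fun j => (hK _).preimage (hfc.iterate _)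
  have hop : ∀ v : Fin q → κ, IsOpen (auxCyl f V v) := fun v => by
    have : auxCyl f V v = ⋂ j : Fin q, f^[(j : ℕ)] ⁻¹' V (v j) := by ext; simp [auxCyl]
    rw [this]
    exact isOpen_iInter_of_finite fun j => (hV _).preimage (hfc.iterate _)
  have hKVc : ∀ v : Fin q → κ, auxCyl f K v ⊆ auxCyl f V v := fun v x hx j => hKV _ (hx j)
  have hdis : ∀ (v u : Fin q → κ) x, x ∈ auxCyl f V v → x ∈ auxCyl f V u → v = u := by
    intro v u x hv hu
    funext j
    by_contra hne
    exact Set.disjoint_left.1 (hd _ _ hne) (hv j) (hu j)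
  have hex : ∀ v : Fin q → κ, ∃ χ : C(X, ℝ), Set.EqOn χ 0 (auxCyl f V v)ᶜ ∧
      Set.EqOn χ 1 (auxCyl f K v) ∧ ∀ x, χ x ∈ Set.Icc (0 : ℝ) 1 := fun v =>
    exists_continuous_zero_one_of_isClosed (hop v).isClosed_compl (hcl v)
      (Set.disjoint_left.2 fun x hx hx' => hx (hKVc v hx'))
  choose χ h0 h1 h01 using hex
  let ψ : C(X, ℝ) := ⟨fun x => M + ∑ v : Fin q → κ, (g (fun i => e (v i)) - M) * χ v x,
    by fun_prop⟩
  have hψV : ∀ v x, x ∈ auxCyl f V v → ψ x = M + (g (fun i => e (v i)) - M) * χ v x := by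
    intro v x hx
    change M + ∑ v : Fin q → κ, (g (fun i => e (v i)) - M) * χ v x = _
    rw [Finset.sum_eq_single v]
    · intro u _ hu
      rw [h0 u (fun hx' => hu (hdis _ _ x hx' hx))]; simp
    · simp
  have hψM : ∀ x, ψ x ≤ M := by
    intro x
    change M + ∑ v : Fin q → κ, (g (fun i => e (v i)) - M) * χ v x ≤ M
    have : ∑ v : Fin q → κ, (g (fun i => e (v i)) - M) * χ v x ≤ 0 :=
      Finset.sum_nonpos fun v _ =>
        mul_nonpos_of_nonpos_of_nonneg (by linarith [hM (fun i => e (v i))]) (h01 v x).1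
    linarith
  refine ⟨ψ, fun x => ?_, ?_⟩
  · by_cases hx : ∃ v : Fin q → κ, x ∈ auxCyl f V v
    · obtain ⟨v, hv⟩ := hx
      have hw : (fun i : Fin q => ζ (f^[(i : ℕ)] x)) = fun i => e (v i) :=
        funext fun i => hζ _ _ (hv i)
      rw [hψV v x hv, hw]
      nlinarith [hM (fun i => e (v i)), (h01 v x).2]
    · push Not at hx
      have : ψ x = M := by
        change M + ∑ v : Fin q → κ, (g (fun i => e (v i)) - M) * χ v x = M
        rw [Finset.sum_eq_zero]
        · simp
        · intro v _
          rw [h0 v (hx v)]; simp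
      rw [this]; exact hM _
  · set B : Set X := ⋃ j : Fin q, f^[(j : ℕ)] ⁻¹' (⋃ i, K i)ᶜ with hB
    have hUm : MeasurableSet (⋃ i, K i)ᶜ := (MeasurableSet.iUnion hKm).compl
    have hBm : MeasurableSet B := MeasurableSet.iUnion fun j => (hf.measurable.iterate _) hUm
    have hBμ : μ.real B ≤ q * δ := by
      refine (measureReal_iUnion_fintype_le _).trans ?_
      have : ∀ j ∈ (Finset.univ : Finset (Fin q)),
          μ.real (f^[(j : ℕ)] ⁻¹' (⋃ i, K i)ᶜ) ≤ δ := fun j _ => by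
        rw [measureReal_def, (hf.iterate j).measure_preimage hUm.nullMeasurableSet]
        exact hKδ
      refine (Finset.sum_le_sum this).trans (by simp)
    have hcm : ∀ v : Fin q → κ, MeasurableSet (auxCyl f K v) := fun v => (hcl v).measurableSet
    have hint : ∀ v : Fin q → κ, Integrable
        ((auxCyl f K v).indicator (fun _ => g (fun i => e (v i)))) μ := fun v =>
      (integrable_const _).indicator (hcm v)
    have hintB : Integrable (B.indicator (fun _ => M)) μ := (integrable_const _).indicator hBm
    have hle : ∀ x, ψ x ≤ (∑ v : Fin q → κ,
        (auxCyl f K v).indicator (fun _ => g (fun i => e (v i))) x)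
          + B.indicator (fun _ => M) x := by
      intro x
      by_cases hx : ∃ v : Fin q → κ, x ∈ auxCyl f K v
      · obtain ⟨v, hv⟩ := hx
        rw [Finset.sum_eq_single v, Set.indicator_of_mem hv, hψV v x (hKVc v hv), h1 v hv]
        · have : 0 ≤ B.indicator (fun _ => M) x := Set.indicator_nonneg (fun _ _ => hM0) x
          simp only [Pi.one_apply]
          linarith
        · intro u _ hu
          exact Set.indicator_of_notMem
            (fun hx' => hu (hdis _ _ x (hKVc u hx') (hKVc v hv))) _
        · simp
      · have hxB : x ∈ B := by
          by_contra hxB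
          apply hx
          simp only [hB, Set.mem_iUnion, Set.mem_preimage, Set.mem_compl_iff, not_exists,
            not_not] at hxB
          push Not at hxB
          choose v hv using hxB
          exact ⟨v, hv⟩
        push Not at hx
        rw [Finset.sum_eq_zero (fun v _ => Set.indicator_of_notMem (hx v) _),
          Set.indicator_of_mem hxB, zero_add]
        exact hψM x
    have hψi : Integrable (fun x => ψ x) μ :=
      ψ.continuous.integrable_of_hasCompactSupport (HasCompactSupport.of_compactSpace _)
    refine (integral_mono hψi ((integrable_finsetSum _ fun v _ => hint v).add hintB) hle).trans ?_
    simp only [Pi.add_apply]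
    rw [integral_add (integrable_finsetSum _ fun v _ => hint v) hintB,
      integral_finsetSum _ (fun v _ => hint v), integral_indicator_const _ hBm]
    refine add_le_add (Finset.sum_le_sum fun v _ => ?_) ?_
    · rw [integral_indicator_const _ (hcm v), smul_eq_mul, mul_comm]
    · rw [smul_eq_mul, mul_comm]
      exact mul_le_mul_of_nonneg_left hBμ hM0

theorem aux_closed {X : Type*} [MetricSpace X] [MeasurableSpace X] [BorelSpace X]
    (μ : Measure X) [IsProbabilityMeasure μ] (P : Finset (Set X)) (hP : IsPartition μ P)
    (δ : ℝ) (hδ : 0 < δ) :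
    ∃ K : P → Set X, (∀ i, IsClosed (K i)) ∧ (∀ i, K i ⊆ (i : Set X)) ∧
      (∀ i j, i ≠ j → Disjoint (K i) (K j)) ∧ μ.real (⋃ i, K i)ᶜ ≤ δ := by
  classical
  let A' : P → Set X := fun i => (i : Set X) \ ⋃ j : {j : P // j ≠ i}, (j.1 : Set X)
  have hA'm : ∀ i, MeasurableSet (A' i) := fun i =>
    (hP.1 _ i.2).diff (MeasurableSet.iUnion fun j => hP.1 _ j.1.2)
  have hδ' : ENNReal.ofReal (δ / (P.card + 1)) ≠ 0 := by
    have : 0 < δ / ((P.card : ℝ) + 1) := by positivity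
    simpa using this
  have hex := fun i => (hA'm i).exists_isClosed_sdiff_lt (measure_ne_top μ _) hδ'
  choose K hKA hKc hKμ using hex
  refine ⟨K, hKc, fun i => (hKA i).trans diff_subset, ?_, ?_⟩
  · intro i j hij
    refine Set.disjoint_left.2 fun x hx hx' => ?_
    exact (hKA i hx).2 (Set.mem_iUnion.2 ⟨⟨j, hij.symm⟩, (hKA j hx').1⟩)
  · have hnull : ∀ i : P, μ ((i : Set X) \ A' i) = 0 := by
      intro i
      have : (i : Set X) \ A' i ⊆ ⋃ j : {j : P // j ≠ i}, ((i : Set X) ∩ (j.1 : Set X)) := by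
        intro x hx
        have hx2 : x ∈ ⋃ j : {j : P // j ≠ i}, (j.1 : Set X) := by
          by_contra h
          exact hx.2 ⟨hx.1, h⟩
        obtain ⟨j, hj⟩ := Set.mem_iUnion.1 hx2
        exact Set.mem_iUnion.2 ⟨j, hx.1, hj⟩
      refine measure_mono_null this (measure_iUnion_null fun j => ?_)
      exact hP.2.2 _ i.2 _ j.1.2 (fun h => j.2 (Subtype.ext h.symm))
    have h1 : ∀ i : P, μ ((i : Set X) \ K i) ≤ ENNReal.ofReal (δ / (P.card + 1)) := by
      intro i
      have : (i : Set X) \ K i ⊆ ((i : Set X) \ A' i) ∪ (A' i \ K i) := by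
        intro x hx
        by_cases h : x ∈ A' i
        · exact Or.inr ⟨h, hx.2⟩
        · exact Or.inl ⟨hx.1, h⟩
      refine (measure_mono this).trans ((measure_union_le _ _).trans ?_)
      rw [hnull, zero_add]
      exact (hKμ i).le
    have h2 : (⋃ i, K i)ᶜ ⊆ (Set.univ \ ⋃ A ∈ P, A) ∪ ⋃ i : P, ((i : Set X) \ K i) := by
      intro x hx
      by_cases h : x ∈ ⋃ A ∈ P, A
      · simp only [Set.mem_iUnion] at h
        obtain ⟨A, hA, hxA⟩ := h
        exact Or.inr (Set.mem_iUnion.2 ⟨⟨A, hA⟩, hxA, fun hx' => hx (Set.mem_iUnion.2 ⟨_, hx'⟩)⟩)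
      · exact Or.inl ⟨trivial, h⟩
    have h3 : μ (⋃ i, K i)ᶜ ≤ ENNReal.ofReal δ := by
      refine (measure_mono h2).trans ((measure_union_le _ _).trans ?_)
      rw [hP.2.1, zero_add]
      refine (measure_iUnion_fintype_le _ _).trans ((Finset.sum_le_sum fun i _ => h1 i).trans ?_)
      rw [Finset.sum_const, nsmul_eq_mul, ← ENNReal.ofReal_natCast,
        ← ENNReal.ofReal_mul (by positivity)]
      refine ENNReal.ofReal_le_ofReal ?_
      simp only [Finset.card_univ, Fintype.card_coe]
      rw [mul_div_assoc', div_le_iff₀ (by positivity)]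
      nlinarith
    exact ENNReal.toReal_le_of_le_ofReal hδ.le h3

theorem aux_zeta {X κ : Type*} [Finite κ] [MetricSpace X] [CompactSpace X]
    (ε : ℝ) (t : Finset X) (ht : ∀ x : X, ∃ c ∈ t, dist x c < ε / 2)
    (K : κ → Set X) (hK : ∀ i, IsClosed (K i)) (hd : ∀ i j, i ≠ j → Disjoint (K i) (K j))
    (hdiam : ∀ i, Metric.diam (K i) < ε) :
    ∃ (V : κ → Set X) (ζ : X → κ ⊕ t), (∀ i, IsOpen (V i)) ∧ (∀ i, K i ⊆ V i) ∧
      (∀ i j, i ≠ j → Disjoint (V i) (V j)) ∧ (∀ i, ∀ x ∈ V i, ζ x = Sum.inl i) ∧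
      ∀ x y, ζ x = ζ y → dist x y ≤ ε := by
  classical
  have ev1 : ∀ᶠ ρ in 𝓝[>] (0 : ℝ), ∀ i j, i ≠ j →
      Disjoint (Metric.thickening ρ (K i)) (Metric.thickening ρ (K j)) := by
    rw [eventually_all]; intro i
    rw [eventually_all]; intro j
    by_cases hij : i = j
    · exact Eventually.of_forall fun ρ h => absurd hij h
    · obtain ⟨δ, hδ, hdis⟩ := (hd i j hij).exists_thickenings (hK i).isCompact (hK j)
      filter_upwards [Ioo_mem_nhdsGT hδ] with ρ hρ _
      exact hdis.mono (Metric.thickening_mono hρ.2.le _) (Metric.thickening_mono hρ.2.le _)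
  have ev2 : ∀ᶠ ρ in 𝓝[>] (0 : ℝ), ∀ i, Metric.diam (K i) + 2 * ρ < ε := by
    rw [eventually_all]; intro i
    have hpos : 0 < (ε - Metric.diam (K i)) / 2 := by linarith [hdiam i]
    filter_upwards [Ioo_mem_nhdsGT hpos] with ρ hρ
    linarith [hρ.2]
  obtain ⟨ρ, ⟨h1, h2⟩, hρ⟩ := ((ev1.and ev2).and self_mem_nhdsWithin).exists
  have hρ0 : (0 : ℝ) < ρ := hρ
  choose c hct hc using ht
  let V : κ → Set X := fun i => Metric.thickening ρ (K i)
  let ζ : X → κ ⊕ t := fun x =>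
    if h : ∃ i, x ∈ V i then Sum.inl h.choose else Sum.inr ⟨c x, hct x⟩
  have hζV : ∀ i, ∀ x ∈ V i, ζ x = Sum.inl i := by
    intro i x hx
    have hex : ∃ i, x ∈ V i := ⟨i, hx⟩
    have : ζ x = Sum.inl hex.choose := dif_pos hex
    rw [this]
    congr 1
    by_contra hne
    exact Set.disjoint_left.1 (h1 _ _ hne) hex.choose_spec hx
  refine ⟨V, ζ, fun i => Metric.isOpen_thickening, fun i => Metric.self_subset_thickening hρ0 _,
    h1, hζV, ?_⟩
  intro x y hxy
  by_cases hx : ∃ i, x ∈ V i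
  · obtain ⟨i, hi⟩ := hx
    by_cases hy : ∃ i, y ∈ V i
    · obtain ⟨j, hj⟩ := hy
      rw [hζV i x hi, hζV j y hj] at hxy
      obtain rfl := Sum.inl_injective hxy
      have hb : Bornology.IsBounded (V i) := isCompact_univ.isBounded.subset (subset_univ _)
      refine (Metric.dist_le_diam_of_mem hb hi hj).trans ?_
      exact (Metric.diam_thickening_le _ hρ0.le).trans (h2 i).le
    · have : ζ y = Sum.inr ⟨c y, hct y⟩ := dif_neg hy
      rw [hζV i x hi, this] at hxy
      exact absurd hxy (by simp)
  · have hx' : ζ x = Sum.inr ⟨c x, hct x⟩ := dif_neg hx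
    by_cases hy : ∃ i, y ∈ V i
    · obtain ⟨j, hj⟩ := hy
      rw [hx', hζV j y hj] at hxy
      exact absurd hxy (by simp)
    · have hy' : ζ y = Sum.inr ⟨c y, hct y⟩ := dif_neg hy
      rw [hx', hy'] at hxy
      have hcc : c x = c y := by simpa using hxy
      have h3 := dist_triangle_right x y (c x)
      have h4 := hc x
      have h5 := hc y
      rw [← hcc] at h5
      linarith

theorem aux_main {X : Type*} [MetricSpace X] [CompactSpace X] [Nonempty X]
    [MeasurableSpace X] [BorelSpace X]
    (f : X → X) (hf : Continuous f) (ε : ℝ) (hε : 0 < ε)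
    (E : ℕ → Finset X) (hEne : ∀ n, (E n).Nonempty)
    (hsep : ∀ n, ∀ x ∈ E n, ∀ y ∈ E n, x ≠ y → ∃ i < n, ε < dist (f^[i] x) (f^[i] y))
    (μ : ProbabilityMeasure X)
    (hconv : ∀ ψ : C(X, ℝ), Tendsto (fun n : ℕ =>
        ∫ x, ψ x ∂(((n * (E n).card : ℕ) : ℝ≥0∞)⁻¹ •
          ∑ x ∈ E n, ∑ k ∈ Finset.range n, Measure.dirac (f^[k] x))) atTop
        (𝓝 (∫ x, ψ x ∂(μ : Measure X))))
    (P : Finset (Set X)) (hP : IsPartition (μ : Measure X) P) (hdiam : partDiamLt P ε)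
    (q : ℕ) (hq : 0 < q) :
    limsup (fun n : ℕ => Real.log ((E n).card) / n) atTop
      ≤ partEnt (μ : Measure X) (dynJoin f P q) / q := by
  classical
  have hinv := aux_invariant f hf E μ hconv
  set m : Measure X := (μ : Measure X) with hm
  set H : ℝ := partEnt m (dynJoin f P q) with hH
  have hq0 : (0 : ℝ) < q := by exact_mod_cast hq
  refine le_of_forall_pos_le_add fun κ hκ => ?_
  obtain ⟨t, ht⟩ : ∃ t : Finset X, ∀ x : X, ∃ c ∈ t, dist x c < ε / 2 := by
    obtain ⟨t, -, htf, hcov⟩ := finite_cover_balls_of_compact (isCompact_univ (X := X))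
      (half_pos hε)
    refine ⟨htf.toFinset, fun x => ?_⟩
    have := hcov (mem_univ x)
    simp only [mem_iUnion, Metric.mem_ball, exists_prop] at this
    obtain ⟨c, hc, hxc⟩ := this
    exact ⟨c, by simpa using hc, hxc⟩
  haveI : Nonempty (P ⊕ t) := by
    obtain ⟨c, hc, -⟩ := ht (Classical.arbitrary X)
    exact ⟨Sum.inr ⟨c, hc⟩⟩
  let A : P ⊕ t → Set X := Sum.elim (fun i => (i : Set X)) (fun _ => ∅)
  have hAm : ∀ i, MeasurableSet (A i) := by
    rintro (i | i)
    · exact hP.1 _ i.2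
    · exact MeasurableSet.empty
  have hAd : ∀ i j, i ≠ j → m (A i ∩ A j) = 0 := by
    rintro (i | i) (j | j) hij
    · exact hP.2.2 _ i.2 _ j.2 (fun h => hij (congrArg _ (Subtype.ext h)))
    · simp [A]
    · simp [A]
    · simp [A]
  set N : ℝ := ((Fintype.card (Fin q → P ⊕ t) : ℕ) : ℝ) with hN
  have hN0 : 0 < N := by
    rw [hN]; exact_mod_cast Fintype.card_pos
  set η : ℝ := κ / (2 * N) with hη
  have hη0 : 0 < η := by positivity
  have hηN : η * N = κ / 2 := by rw [hη]; field_simp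
  set D : ℝ := 1 + η * N with hD
  have hD0 : 0 < D := by positivity
  have hlogD : Real.log D ≤ κ / 2 := by
    have := Real.log_le_sub_one_of_pos hD0
    linarith
  have hlogD0 : 0 ≤ Real.log D := Real.log_nonneg (by rw [hD, hηN]; linarith)
  let p0 : (Fin q → P ⊕ t) → ℝ := fun w => m.real (auxCyl f A w)
  have hp00 : ∀ w, 0 ≤ p0 w := fun w => measureReal_nonneg
  let p : (Fin q → P ⊕ t) → ℝ := fun w => (p0 w + η) / D
  have hp : ∀ w, 0 < p w := fun w => div_pos (by linarith [hp00 w]) hD0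
  have hps : ∑ w, p w ≤ 1 := by
    have h1 := aux_cyl_sum m f hinv A hAm hAd q
    simp only [p]
    rw [← Finset.sum_div, div_le_one hD0, Finset.sum_add_distrib, Finset.sum_const, nsmul_eq_mul,
      Finset.card_univ, ← hN, hD, mul_comm]
    linarith
  have hlogp : ∀ w, -Real.log (p w) = Real.log D - Real.log (p0 w + η) := fun w => by
    simp only [p]
    rw [Real.log_div (by linarith [hp00 w]) hD0.ne']; ring
  have hp1 : ∀ w, p w ≤ 1 := fun w =>
    (Finset.single_le_sum (fun w _ => (hp w).le) (Finset.mem_univ w)).trans hps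
  have hg0 : ∀ w, 0 ≤ -Real.log (p w) := fun w => by
    linarith [Real.log_nonpos (hp w).le (hp1 w)]
  set M : ℝ := Real.log D - Real.log η with hMdef
  have hM : ∀ w, -Real.log (p w) ≤ M := fun w => by
    rw [hlogp, hMdef]
    linarith [Real.log_le_log hη0 (by linarith [hp00 w] : η ≤ p0 w + η)]
  have hM0 : 0 ≤ M := (hg0 _).trans (hM (Classical.arbitrary _))
  set δ : ℝ := κ / (2 * (M * q + 1)) with hδ
  have hδ0 : 0 < δ := by positivity
  have hMδ : M * (q * δ) ≤ κ / 2 := by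
    have : M * q * δ ≤ (M * q + 1) * δ := by nlinarith
    have h2 : (M * q + 1) * δ = κ / 2 := by rw [hδ]; field_simp
    linarith
  obtain ⟨K, hKc, hKP, hKd, hKμ⟩ := aux_closed m P hP δ hδ0
  have hKdiam : ∀ i, Metric.diam (K i) < ε := fun i =>
    (Metric.diam_mono (hKP i) (isCompact_univ.isBounded.subset (subset_univ _))).trans_lt
      (hdiam _ i.2)
  obtain ⟨V, ζ, hVo, hKV, hVd, hζV, hζ⟩ := aux_zeta ε t ht K hKc hKd hKdiam
  obtain ⟨ψ, hψ1, hψ2⟩ := aux_majorant m f hinv hf K V hKc hVo hKV hVd δ hKμ ζ Sum.inl hζV q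
    (fun w => -Real.log (p w)) M hM hM0
  -- the limit integral
  have hint : ∫ x, ψ x ∂m ≤ H + κ := by
    refine hψ2.trans ?_
    have h1 : ∀ v ∈ (Finset.univ : Finset (Fin q → P)),
        -Real.log (p (fun i => Sum.inl (v i))) * m.real (auxCyl f K v) ≤
          Real.negMulLog (m.real (auxCyl f (fun i : P => (i : Set X)) v))
            + Real.log D * m.real (auxCyl f (fun i : P => (i : Set X)) v) := by
      intro v _
      set a : ℝ := m.real (auxCyl f (fun i : P => (i : Set X)) v) with ha
      have ha0 : 0 ≤ a := measureReal_nonneg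
      have hpa : p0 (fun i => Sum.inl (v i)) = a := rfl
      have hKa : m.real (auxCyl f K v) ≤ a :=
        measureReal_mono (fun x hx j => hKP _ (hx j))
      refine (mul_le_mul_of_nonneg_left hKa (hg0 _)).trans ?_
      rw [hlogp, hpa, Real.negMulLog]
      rcases ha0.eq_or_lt with h | h
      · rw [← h]; simp
      · have := Real.log_le_log h (by linarith : a ≤ a + η)
        nlinarith
    have h2 := Finset.sum_le_sum h1
    rw [Finset.sum_add_distrib, ← aux_partEnt m f hinv P hP, ← hH, ← Finset.mul_sum] at h2
    have h3 := aux_cyl_sum m f hinv (fun i : P => (i : Set X)) (fun i => hP.1 _ i.2)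
      (fun i j h => hP.2.2 _ i.2 _ j.2 (fun h' => h (Subtype.ext h'))) q
    have h4 := mul_le_mul_of_nonneg_left h3 hlogD0
    linarith
  set C : ℝ := q * (q * Real.log (Fintype.card (P ⊕ t))) + q * M with hC
  have hlim : Tendsto (fun n : ℕ => ((∫ x, ψ x ∂(((n * (E n).card : ℕ) : ℝ≥0∞)⁻¹ •
          ∑ x ∈ E n, ∑ k ∈ Finset.range n, Measure.dirac (f^[k] x))) + C / n) / q) atTop
        (𝓝 ((∫ x, ψ x ∂m + 0) / q)) :=
    ((hconv ψ).add (tendsto_const_div_atTop_nhds_zero_nat C)).div_const _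
  have hle : ∀ᶠ n : ℕ in atTop, Real.log ((E n).card) / n ≤
      ((∫ x, ψ x ∂(((n * (E n).card : ℕ) : ℝ≥0∞)⁻¹ •
          ∑ x ∈ E n, ∑ k ∈ Finset.range n, Measure.dirac (f^[k] x))) + C / n) / q := by
    filter_upwards [eventually_gt_atTop 0] with n hn
    have hn0 : (0 : ℝ) < n := by exact_mod_cast hn
    have hc0 : (0 : ℝ) < (E n).card := by exact_mod_cast (hEne n).card_pos
    rw [aux_integral f _ _ _ ψ.continuous]
    have h1 := aux_coding f ζ q hq p hp hps M hM n (E n) (fun x hx y hy hxy => by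
      obtain ⟨i, hi, hd⟩ := hsep n x hx y hy hxy
      exact ⟨i, hi, fun h => absurd (hζ _ _ h) (not_le.2 hd)⟩)
    rw [← hC] at h1
    have h2 : ∑ x ∈ E n, ∑ j ∈ Finset.range n,
        -Real.log (p (fun i => ζ (f^[(i : ℕ)] (f^[j] x))))
        ≤ ∑ x ∈ E n, ∑ j ∈ Finset.range n, ψ (f^[j] x) :=
      Finset.sum_le_sum fun x _ => Finset.sum_le_sum fun j _ => hψ1 _
    set S := ∑ x ∈ E n, ∑ j ∈ Finset.range n, ψ (f^[j] x) with hS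
    have h3 : ((n : ℝ) * (E n).card)⁻¹ * S + C / n = (S + (E n).card * C) / (n * (E n).card) := by
      field_simp
    rw [h3, le_div_iff₀ hq0, le_div_iff₀ (by positivity)]
    have h4 : Real.log (E n).card / n * q * (n * (E n).card)
        = q * ((E n).card * Real.log (E n).card) := by
      field_simp
    rw [h4]
    linarith
  have hbdd : IsCoboundedUnder (· ≤ ·) atTop (fun n : ℕ => Real.log ((E n).card) / n) := by
    refine IsBoundedUnder.isCoboundedUnder_le ⟨0, ?_⟩
    refine eventually_map.2 (Eventually.of_forall fun n => ?_)
    exact div_nonneg (Real.log_natCast_nonneg _) (Nat.cast_nonneg _)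
  have hfin := limsup_le_limsup hle hbdd hlim.isBoundedUnder_le
  rw [hlim.limsup_eq, add_zero] at hfin
  refine hfin.trans ?_
  have hq1 : (1 : ℝ) ≤ q := by exact_mod_cast hq
  calc (∫ x, ψ x ∂m) / q ≤ (H + κ) / q := by gcongr
    _ = H / q + κ / q := add_div _ _ _
    _ ≤ H / q + κ := by
      have := div_le_self hκ.le hq1
      linarith

theorem aux_exists_partition {X : Type*} [MetricSpace X] [CompactSpace X]
    [MeasurableSpace X] [BorelSpace X] (μ : Measure X) (ε : ℝ) (hε : 0 < ε) :
    ∃ P : Finset (Set X), IsPartition μ P ∧ partDiamLt P ε := by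
  classical
  obtain ⟨t, -, htf, hcov⟩ := finite_cover_balls_of_compact (isCompact_univ (X := X))
    (show 0 < ε / 3 by positivity)
  obtain ⟨k, s, -, hs⟩ := htf.fin_param
  let B : Fin k → Set X := fun i => Metric.ball (s i) (ε / 3)
  let D : Fin k → Set X := fun i => B i \ ⋃ j : {j : Fin k // j < i}, B j.1
  have hD : ∀ i, D i ⊆ B i := fun i => diff_subset
  have hdisj : ∀ i j, i < j → Disjoint (D i) (D j) := fun i j hij =>
    Set.disjoint_left.2 fun x hx hx' => hx'.2 (Set.mem_iUnion.2 ⟨⟨i, hij⟩, hx.1⟩)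
  refine ⟨Finset.univ.image D, ⟨?_, ?_, ?_⟩, ?_⟩
  · intro A hA
    obtain ⟨i, -, rfl⟩ := Finset.mem_image.1 hA
    exact Metric.isOpen_ball.measurableSet.diff
      (MeasurableSet.iUnion fun j => Metric.isOpen_ball.measurableSet)
  · have : (Set.univ \ ⋃ A ∈ Finset.univ.image D, A) = ∅ := by
      rw [Set.diff_eq_empty]
      intro x _
      have hx := hcov (mem_univ x)
      simp only [mem_iUnion, exists_prop] at hx
      obtain ⟨c, hc, hxc⟩ := hx
      rw [← hs] at hc
      obtain ⟨i0, rfl⟩ := hc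
      obtain ⟨i, hi, hmin⟩ := WellFounded.has_min (wellFounded_lt (α := Fin k))
        {i | x ∈ B i} ⟨i0, hxc⟩
      have hxD : x ∈ D i := ⟨hi, fun h => by
        obtain ⟨j, hj⟩ := Set.mem_iUnion.1 h
        exact hmin j.1 hj j.2⟩
      simp only [mem_iUnion, Finset.mem_image, Finset.mem_univ, true_and, exists_prop]
      exact ⟨D i, ⟨i, rfl⟩, hxD⟩
    rw [this, measure_empty]
  · intro A hA A' hA' hne
    obtain ⟨i, -, rfl⟩ := Finset.mem_image.1 hA
    obtain ⟨j, -, rfl⟩ := Finset.mem_image.1 hA'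
    have hij : i ≠ j := fun h => hne (congrArg D h)
    have hd : Disjoint (D i) (D j) := by
      rcases lt_or_gt_of_ne hij with h | h
      · exact hdisj _ _ h
      · exact (hdisj _ _ h).symm
    rw [hd.inter_eq, measure_empty]
  · intro A hA
    obtain ⟨i, -, rfl⟩ := Finset.mem_image.1 hA
    have h1 := Metric.diam_mono (hD i) Metric.isBounded_ball
    have h2 := Metric.diam_ball (x := s i) (show (0 : ℝ) ≤ ε / 3 by positivity)
    change Metric.diam (D i) < ε
    have h3 : Metric.diam (B i) ≤ 2 * (ε / 3) := h2
    linarith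

theorem stmt10 {X : Type*} [MetricSpace X] [CompactSpace X] [Nonempty X]
    [MeasurableSpace X] [BorelSpace X]
    (f : X → X) (hf : Continuous f) (ε : ℝ) (hε : 0 < ε)
    (E : ℕ → Finset X) (hEne : ∀ n, (E n).Nonempty)
    (hsep : ∀ n, ∀ x ∈ E n, ∀ y ∈ E n, x ≠ y → ∃ i < n, ε < dist (f^[i] x) (f^[i] y))
    (μ : ProbabilityMeasure X)
    (hconv : ∀ ψ : C(X, ℝ), Tendsto (fun n : ℕ =>
        ∫ x, ψ x ∂(((n * (E n).card : ℕ) : ℝ≥0∞)⁻¹ •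
          ∑ x ∈ E n, ∑ k ∈ Finset.range n, Measure.dirac (f^[k] x))) atTop
        (𝓝 (∫ x, ψ x ∂(μ : Measure X)))) :
    limsup (fun n : ℕ => Real.log ((E n).card) / n) atTop ≤ infEnt (μ : Measure X) f ε := by
  obtain ⟨P0, hP0⟩ := aux_exists_partition (μ : Measure X) ε hε
  refine le_csInf ⟨_, P0, hP0, rfl⟩ ?_
  rintro _ ⟨P, ⟨hP, hdiam⟩, rfl⟩
  have hinv := aux_invariant f hf E μ hconv
  have hmain := aux_main f hf ε hε E hEne hsep μ hconv P hP hdiam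
  refine le_limsup_of_frequently_le ?_ ?_
  · refine Eventually.frequently ?_
    filter_upwards [eventually_gt_atTop 0] with q hq
    exact hmain q hq
  · refine ⟨Real.log (P.card + 1) + 1, eventually_map.2 ?_⟩
    filter_upwards [eventually_gt_atTop 0] with q hq
    have hq1 : (1 : ℝ) ≤ q := by exact_mod_cast hq
    rw [div_le_iff₀ (by linarith)]
    have := aux_partEnt_le (μ : Measure X) f hinv P hP q
    linarith

end
end

section
/- Let (X,d) be a compact metric space, f: X → X a continuous map, and μ ∈ M_f(X). Then for every ε > 0, inf_{F ∋ μ} limsup_{n→∞} (1/n) ln N(F;n,ε) ≤ inf_{ξ: diam ξ < ε} h_μ(f,ξ), where the outer infimum on the left is over all neighborhoods F of μ in the weak* topology on Borel probability measures, and the infimum on the right is over all finite measurable partitions ξ of X with diam ξ < ε. -/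
open MeasureTheory Filter Set Topology
open scoped ENNReal NNReal

open MMD MeasureTheory Filter Set Topology
open scoped ENNReal NNReal

noncomputable section

theorem sum_range_mul_block (g : ℕ → ℝ) (q N : ℕ) :
    ∑ i ∈ Finset.range (N * q), g i
      = ∑ r ∈ Finset.range q, ∑ j ∈ Finset.range N, g (j * q + r) := by
  induction N with
  | zero => simp
  | succ N ih =>
    rw [Nat.succ_mul, Finset.sum_range_add, ih, ← Finset.sum_add_distrib]
    exact Finset.sum_congr rfl fun r _ => by rw [Finset.sum_range_succ]

/-- The coding word of length `q`. -/
def blk {X A : Type*} (f : X → X) (c : X → A) (q : ℕ) (x : X) : Fin q → A :=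
  fun j => c (f^[j] x)

theorem count_words {X A : Type*} [Fintype A] (f : X → X) (c : X → A) (q n : ℕ) (hq : 0 < q)
    (p : (Fin q → A) → ℝ) (hp : ∀ b, 0 < p b) (hs : ∑ b, p b ≤ 1) (L : ℝ) (E : Finset X)
    (hinj : ∀ x ∈ E, ∀ y ∈ E, (∀ i < n, c (f^[i] x) = c (f^[i] y)) → x = y)
    (hL : ∀ x ∈ E, ∑ i ∈ Finset.range n, -Real.log (p (blk f c q (f^[i] x))) ≤ q * L) :
    (E.card : ℝ) ≤ q * (Fintype.card (Fin q → A) : ℝ) ^ 2 * Real.exp L := by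
  classical
  have hp1 : ∀ b, p b ≤ 1 := fun b =>
    (Finset.single_le_sum (fun i _ => (hp i).le) (Finset.mem_univ b)).trans hs
  have hphi : ∀ b, 0 ≤ -Real.log (p b) := fun b => by
    have := Real.log_nonpos (hp b).le (hp1 b); linarith
  set N := n / q with hN
  have hNq : N * q ≤ n := Nat.div_mul_le_self n q
  have hNq' : n < N * q + q := by
    have := Nat.lt_div_mul_add (a := n) hq
    omega
  have hr : ∀ x ∈ E, ∃ r < q,
      ∑ j ∈ Finset.range N, -Real.log (p (blk f c q (f^[j * q + r] x))) ≤ L := by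
    intro x hx
    by_contra! hcon
    have h1 : ∑ r ∈ Finset.range q, L < ∑ r ∈ Finset.range q,
        ∑ j ∈ Finset.range N, -Real.log (p (blk f c q (f^[j * q + r] x))) :=
      Finset.sum_lt_sum_of_nonempty ⟨0, by simpa using hq⟩
        (fun r hr => hcon r (by simpa using hr))
    rw [← sum_range_mul_block (fun i => -Real.log (p (blk f c q (f^[i] x))))] at h1
    have h2 : ∑ i ∈ Finset.range (N * q), -Real.log (p (blk f c q (f^[i] x)))
        ≤ ∑ i ∈ Finset.range n, -Real.log (p (blk f c q (f^[i] x))) :=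
      Finset.sum_le_sum_of_subset_of_nonneg (Finset.range_mono hNq) (fun i _ _ => hphi _)
    have h3 := hL x hx
    simp at h1
    simp at h2 h3
    linarith
  choose! r hrq hrL using hr
  let T := Fin q × ((Fin q → A) × (Fin q → A)) × (Fin N → (Fin q → A))
  let Φ : X → T := fun x =>
    (⟨r x % q, Nat.mod_lt _ hq⟩, (blk f c q x, blk f c q (f^[N * q] x)),
      fun j => blk f c q (f^[j * q + r x] x))
  have hΦ : Set.InjOn Φ E := by
    intro x hx y hy hxy
    have h1 : r x % q = r y % q := congrArg (fun t : T => (t.1 : ℕ)) hxy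
    have h2 : blk f c q x = blk f c q y := congrArg (fun t : T => t.2.1.1) hxy
    have h3 : blk f c q (f^[N * q] x) = blk f c q (f^[N * q] y) :=
      congrArg (fun t : T => t.2.1.2) hxy
    have h4 : (fun j : Fin N => blk f c q (f^[j * q + r x] x))
      = fun j : Fin N => blk f c q (f^[j * q + r y] y) := congrArg (fun t : T => t.2.2) hxy
    rw [Nat.mod_eq_of_lt (hrq x hx), Nat.mod_eq_of_lt (hrq y hy)] at h1
    have hrx := hrq x hx
    refine hinj x hx y hy fun i hi => ?_
    by_cases c1 : i < q
    · exact congrFun h2 ⟨i, c1⟩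
    by_cases c2 : N * q ≤ i
    · have := congrFun h3 ⟨i - N * q, by omega⟩
      simpa [blk, ← Function.iterate_add_apply, Nat.sub_add_cancel c2] using this
    · push Not at c1 c2
      have hd : (i - r x) / q < N := by
        rw [Nat.div_lt_iff_lt_mul hq]; omega
      have := congrFun (congrFun h4 ⟨(i - r x) / q, hd⟩) ⟨(i - r x) % q, Nat.mod_lt _ hq⟩
      simp only [blk, ← Function.iterate_add_apply, ← h1] at this
      have e : (i - r x) % q + ((i - r x) / q * q + r x) = i := by
        have := Nat.mod_add_div' (i - r x) q
        omega
      rwa [e] at this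
  let w : T → ℝ := fun t => Real.exp L * ∏ j, p (t.2.2 j)
  have hw0 : ∀ t, 0 ≤ w t := fun t =>
    mul_nonneg (Real.exp_pos _).le (Finset.prod_nonneg fun j _ => (hp _).le)
  have hw1 : ∀ x ∈ E, 1 ≤ w (Φ x) := by
    intro x hx
    have h := hrL x hx
    have e : ∏ j : Fin N, p ((Φ x).2.2 j)
        = Real.exp (-∑ j ∈ Finset.range N, -Real.log (p (blk f c q (f^[j * q + r x] x)))) := by
      rw [Finset.sum_neg_distrib, neg_neg, Real.exp_sum, Finset.prod_range]
      exact Finset.prod_congr rfl fun j _ => (Real.exp_log (hp _)).symm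
    simp only [w]
    rw [e, ← Real.exp_add]
    exact Real.one_le_exp (by linarith)
  calc (E.card : ℝ) = ∑ x ∈ E, (1 : ℝ) := by simp
    _ ≤ ∑ x ∈ E, w (Φ x) := Finset.sum_le_sum hw1
    _ = ∑ t ∈ E.image Φ, w t := (Finset.sum_image hΦ).symm
    _ ≤ ∑ t, w t := Finset.sum_le_sum_of_subset_of_nonneg (Finset.subset_univ _)
        (fun t _ _ => hw0 t)
    _ = q * (Fintype.card (Fin q → A) : ℝ) ^ 2 * (Real.exp L * (∑ b, p b) ^ N) := by
        rw [Fintype.sum_pow, Finset.mul_sum]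
        simp only [T, Fintype.sum_prod_type, w, Finset.sum_const, Finset.card_univ,
          nsmul_eq_mul, Fintype.card_fin, Fintype.card_prod, Nat.cast_mul]
        ring
    _ ≤ q * (Fintype.card (Fin q → A) : ℝ) ^ 2 * (Real.exp L * 1) := by
        gcongr
        exact pow_le_one₀ (Finset.sum_nonneg fun b _ => (hp b).le) hs
    _ = _ := by ring

theorem real_limsup_nonneg (u : ℕ → ℝ) (hu : ∀ n, 0 ≤ u n) : 0 ≤ limsup u atTop := by
  rw [limsup_eq]
  refine Real.sInf_nonneg fun a ha => ?_
  obtain ⟨n, hn⟩ := (show ∀ᶠ n in atTop, u n ≤ a from ha).exists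
  exact (hu n).trans hn

/-- The cylinder set of a word. -/
def wordSet {X A : Type*} (f : X → X) (S : A → Set X) {q : ℕ} (b : Fin q → A) : Set X :=
  {x | ∀ j : Fin q, f^[j] x ∈ S (b j)}

theorem wordSet_eq {X A : Type*} (f : X → X) (S : A → Set X) {q : ℕ} (b : Fin q → A) :
    wordSet f S b = ⋂ j : Fin q, f^[j] ⁻¹' S (b j) := by
  ext x; simp [wordSet]

theorem exists_psi {X A : Type*} [MetricSpace X] [CompactSpace X] [MeasurableSpace X]
    [BorelSpace X] [Fintype A] (f : X → X) (hf : Continuous f) (μ : Measure X)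
    [IsProbabilityMeasure μ] (q : ℕ) (K U : A → Set X) (hK : ∀ a, IsClosed (K a))
    (hU : ∀ a, IsOpen (U a)) (hKU : ∀ a, K a ⊆ U a) (c : X → A)
    (hc : ∀ a, ∀ x ∈ U a, c x = a) (φ : (Fin q → A) → ℝ) (M : ℝ) (hM : ∀ b, φ b ≤ M) :
    ∃ ψ : C(X, ℝ), (∀ x, φ (blk f c q x) ≤ ψ x) ∧
      ∫ x, ψ x ∂μ ≤ M + ∑ b, (φ b - M) * μ.real (wordSet f K b) := by
  classical
  have hKc : ∀ b : Fin q → A, IsClosed (wordSet f K b) := fun b => by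
    rw [wordSet_eq]
    exact isClosed_iInter fun j => (hK _).preimage (hf.iterate _)
  have hUo : ∀ b : Fin q → A, IsOpen (wordSet f U b) := fun b => by
    rw [wordSet_eq]
    exact isOpen_iInter_of_finite fun j => (hU _).preimage (hf.iterate _)
  have hKU' : ∀ b : Fin q → A, wordSet f K b ⊆ wordSet f U b := fun b x hx j => hKU _ (hx j)
  have hb : ∀ b : Fin q → A, ∀ x ∈ wordSet f U b, blk f c q x = b := fun b x hx => by
    funext j; exact hc _ _ (hx j)
  have hg : ∀ b : Fin q → A, ∃ g : C(X, ℝ), EqOn g 0 (wordSet f U b)ᶜ ∧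
      EqOn g 1 (wordSet f K b) ∧ ∀ x, g x ∈ Icc (0 : ℝ) 1 := fun b =>
    exists_continuous_zero_one_of_isClosed (hUo b).isClosed_compl (hKc b)
      (Set.disjoint_left.2 fun x hx hx' => hx (hKU' b hx'))
  choose g hg0 hg1 hg01 using hg
  have hint : ∀ h : C(X, ℝ), Integrable h μ := fun h =>
    h.continuous.integrable_of_hasCompactSupport (HasCompactSupport.of_compactSpace _)
  refine ⟨ContinuousMap.const X M + ∑ b, (φ b - M) • g b, fun x => ?_, ?_⟩
  · simp only [ContinuousMap.add_apply, ContinuousMap.const_apply, ContinuousMap.coe_sum,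
      Finset.sum_apply, ContinuousMap.smul_apply, smul_eq_mul]
    rw [Finset.sum_eq_single (blk f c q x)]
    · have h1 := hg01 (blk f c q x) x
      have h2 := hM (blk f c q x)
      nlinarith [h1.1, h1.2]
    · intro b _ hne
      have : x ∈ (wordSet f U b)ᶜ := fun hx => hne (hb b x hx).symm
      rw [hg0 b this]; simp
    · simp
  · simp only [ContinuousMap.add_apply, ContinuousMap.const_apply, ContinuousMap.coe_sum,
      Finset.sum_apply, ContinuousMap.smul_apply, smul_eq_mul]
    rw [integral_add (integrable_const _)
      (integrable_finsetSum _ fun b _ => (hint (g b)).const_mul _),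
      integral_finsetSum _ fun b _ => (hint (g b)).const_mul _]
    simp only [integral_const, probReal_univ, one_smul, integral_const_mul]
    refine add_le_add_right (Finset.sum_le_sum fun b _ => ?_) M
    refine mul_le_mul_of_nonpos_left ?_ (sub_nonpos.2 (hM b))
    rw [← integral_indicator_one (hKc b).measurableSet]
    refine integral_mono ((integrable_const _).indicator (hKc b).measurableSet) (hint _) fun x => ?_
    by_cases hx : x ∈ wordSet f K b
    · simp [hx, hg1 b hx]
    · simpa [hx] using (hg01 b x).1

theorem exists_coding {X A : Type*} [MetricSpace X] [CompactSpace X] [Fintype A]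
    (K : A → Set X) (hK : ∀ a, IsClosed (K a)) (hdisj : Pairwise fun a b => Disjoint (K a) (K b))
    (ε : ℝ) (hdiam : ∀ a, Metric.diam (K a) < ε) (d : X → A) (hd : ∀ x, K (d x) = ∅)
    (hd' : ∀ x y, d x = d y → dist x y ≤ ε) :
    ∃ (U : A → Set X) (c : X → A), (∀ a, IsOpen (U a)) ∧ (∀ a, K a ⊆ U a) ∧
      (∀ a, ∀ x ∈ U a, c x = a) ∧ ∀ x y, c x = c y → dist x y ≤ ε := by
  classical
  have h1 : ∀ a b, a ≠ b → ∀ᶠ r in 𝓝[>] (0 : ℝ),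
      Disjoint (Metric.thickening r (K a)) (Metric.thickening r (K b)) := by
    intro a b hab
    obtain ⟨δ, hδ, h⟩ := (hdisj hab).exists_thickenings (hK a).isCompact (hK b)
    filter_upwards [Ioo_mem_nhdsGT hδ] with r hr
    exact h.mono (Metric.thickening_mono hr.2.le _) (Metric.thickening_mono hr.2.le _)
  have h2 : ∀ a, ∀ᶠ r in 𝓝[>] (0 : ℝ), Metric.diam (Metric.thickening r (K a)) ≤ ε := by
    intro a
    have : 0 < (ε - Metric.diam (K a)) / 2 := by linarith [hdiam a]
    filter_upwards [Ioo_mem_nhdsGT this] with r hr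
    have := Metric.diam_thickening_le (K a) hr.1.le
    linarith [hr.2]
  have h3 : ∀ᶠ r in 𝓝[>] (0 : ℝ), (∀ a b, a ≠ b →
      Disjoint (Metric.thickening r (K a)) (Metric.thickening r (K b))) ∧
      (∀ a, Metric.diam (Metric.thickening r (K a)) ≤ ε) ∧ 0 < r := by
    refine Filter.Eventually.and ?_ (Filter.Eventually.and ?_ self_mem_nhdsWithin)
    · simp only [eventually_all]; exact h1
    · simp only [eventually_all]; exact h2
  obtain ⟨r, hr1, hr2, hr0⟩ := h3.exists
  let U := fun a => Metric.thickening r (K a)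
  let c : X → A := fun x => if h : ∃ a, x ∈ U a then h.choose else d x
  have hc : ∀ a, ∀ x ∈ U a, c x = a := by
    intro a x hx
    have h : ∃ a, x ∈ U a := ⟨a, hx⟩
    have e : c x = h.choose := dif_pos h
    rw [e]
    by_contra hne
    exact Set.disjoint_left.1 (hr1 _ _ hne) h.choose_spec hx
  have hc2 : ∀ x, x ∈ U (c x) ∨ ((∀ a, x ∉ U a) ∧ c x = d x) := by
    intro x
    by_cases h : ∃ a, x ∈ U a
    · left
      obtain ⟨a, ha⟩ := h
      rwa [hc a x ha]
    · right
      exact ⟨by simpa using h, dif_neg h⟩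
  have hUe : ∀ x, U (d x) = ∅ := fun x => by simp [U, hd x]
  refine ⟨U, c, fun a => Metric.isOpen_thickening, fun a => Metric.self_subset_thickening hr0 _,
    hc, fun x y hxy => ?_⟩
  rcases hc2 x with hx | ⟨hx, hx'⟩ <;> rcases hc2 y with hy | ⟨hy, hy'⟩
  · rw [← hxy] at hy
    exact (Metric.dist_le_diam_of_mem (isCompact_univ.isBounded.subset (subset_univ _)) hx hy).trans
      (hr2 _)
  · rw [hxy, hy', hUe] at hx; exact absurd hx (by simp)
  · rw [← hxy, hx', hUe] at hy; exact absurd hy (by simp)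
  · exact hd' _ _ (by rw [← hx', ← hy', hxy])

theorem wordSet_pairwise {X A : Type*} (f : X → X) (S : A → Set X) {q : ℕ}
    (hdisj : Pairwise fun a b => Disjoint (S a) (S b)) :
    Pairwise fun b b' : Fin q → A => Disjoint (wordSet f S b) (wordSet f S b') := by
  intro b b' hne
  obtain ⟨j, hj⟩ := Function.ne_iff.1 hne
  exact Set.disjoint_left.2 fun x hx hx' => Set.disjoint_left.1 (hdisj hj) (hx j) (hx' j)

theorem wordSet_measurable {X A : Type*} [MeasurableSpace X] (f : X → X) (hf : Measurable f)
    (S : A → Set X) {q : ℕ} (hS : ∀ a, MeasurableSet (S a)) (b : Fin q → A) :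
    MeasurableSet (wordSet f S b) := by
  rw [wordSet_eq]
  exact MeasurableSet.iInter fun j => (hS _).preimage (hf.iterate _)

theorem wordSet_sum_le {X A : Type*} [MeasurableSpace X] [Fintype A] (f : X → X)
    (hf : Measurable f) (μ : Measure X) [IsProbabilityMeasure μ]
    (S : A → Set X) {q : ℕ} (hS : ∀ a, MeasurableSet (S a))
    (hdisj : Pairwise fun a b => Disjoint (S a) (S b)) :
    ∑ b : Fin q → A, μ.real (wordSet f S b) ≤ 1 := by
  rw [← measureReal_iUnion_fintype (wordSet_pairwise f S hdisj) (wordSet_measurable f hf S hS)]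
  exact measureReal_le_one

/-- If `K a` is close to `S a`, the cylinders over `K` have almost full measure. -/
theorem wordSet_sum_ge {X A : Type*} [MeasurableSpace X] [Fintype A] (f : X → X)
    (μ : Measure X) [IsProbabilityMeasure μ] (hμ : MeasurePreserving f μ μ)
    (S K : A → Set X) (q : ℕ) (hK : ∀ a, MeasurableSet (K a))
    (hcov : μ.real (⋃ a, S a)ᶜ = 0)
    (γ : ℝ) (hγ : ∀ a, μ.real (S a \ K a) ≤ γ) :
    1 - ∑ b : Fin q → A, μ.real (wordSet f K b) ≤ q * (Fintype.card A * γ) := by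
  have h1 : μ.real (⋃ a, K a)ᶜ ≤ Fintype.card A * γ := by
    have : (⋃ a, K a)ᶜ ⊆ (⋃ a, S a)ᶜ ∪ ⋃ a, (S a \ K a) := by
      intro x hx
      by_cases h : x ∈ ⋃ a, S a
      · right
        obtain ⟨a, ha⟩ := mem_iUnion.1 h
        exact mem_iUnion.2 ⟨a, ha, fun h' => hx (mem_iUnion.2 ⟨a, h'⟩)⟩
      · left; exact h
    calc μ.real (⋃ a, K a)ᶜ ≤ μ.real ((⋃ a, S a)ᶜ ∪ ⋃ a, (S a \ K a)) := measureReal_mono this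
      _ ≤ μ.real (⋃ a, S a)ᶜ + μ.real (⋃ a, (S a \ K a)) := measureReal_union_le _ _
      _ ≤ 0 + ∑ a, μ.real (S a \ K a) := by
          rw [hcov]; gcongr; exact measureReal_iUnion_fintype_le _
      _ ≤ 0 + ∑ a : A, γ := by gcongr with a; exact hγ a
      _ = _ := by simp
  have hKm : MeasurableSet (⋃ a, K a)ᶜ := (MeasurableSet.iUnion hK).compl
  have h2 : (univ : Set X) ⊆ (⋃ b : Fin q → A, wordSet f K b) ∪
      ⋃ j : Fin q, f^[j] ⁻¹' (⋃ a, K a)ᶜ := by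
    intro x _
    by_cases h : ∀ j : Fin q, ∃ a, f^[j] x ∈ K a
    · left
      choose b hb using h
      exact mem_iUnion.2 ⟨b, hb⟩
    · right
      push Not at h
      obtain ⟨j, hj⟩ := h
      exact mem_iUnion.2 ⟨j, by simpa using hj⟩
  have h3 : (1 : ℝ) ≤ ∑ b : Fin q → A, μ.real (wordSet f K b) +
      ∑ j : Fin q, μ.real (f^[j] ⁻¹' (⋃ a, K a)ᶜ) := by
    calc (1 : ℝ) = μ.real univ := probReal_univ.symm
      _ ≤ _ := measureReal_mono h2
      _ ≤ _ := measureReal_union_le _ _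
      _ ≤ _ := add_le_add (measureReal_iUnion_fintype_le _) (measureReal_iUnion_fintype_le _)
  have h4 : ∀ j : Fin q, μ.real (f^[j] ⁻¹' (⋃ a, K a)ᶜ) = μ.real (⋃ a, K a)ᶜ := fun j =>
    (hμ.iterate j).measureReal_preimage hKm.nullMeasurableSet
  simp only [h4, Finset.sum_const, Finset.card_univ, Fintype.card_fin, nsmul_eq_mul] at h3
  have : (q : ℝ) * μ.real (⋃ a, K a)ᶜ ≤ q * (Fintype.card A * γ) := by gcongr
  linarith

theorem main_est {X A : Type*} [MetricSpace X] [CompactSpace X] [Nonempty X]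
    [MeasurableSpace X] [BorelSpace X] [Fintype A]
    (f : X → X) (hf : Continuous f) (μ : ProbabilityMeasure X) (hμ : InvariantProb f μ)
    (ε : ℝ) (S : A → Set X) (hS : ∀ a, MeasurableSet (S a))
    (hdisj : Pairwise fun a b => Disjoint (S a) (S b))
    (hcov : (μ : Measure X).real (⋃ a, S a)ᶜ = 0) (hdiam : ∀ a, Metric.diam (S a) < ε)
    (d : X → A) (hd : ∀ x, S (d x) = ∅) (hd' : ∀ x y, d x = d y → dist x y ≤ ε)
    (q : ℕ) (hq : 0 < q) (δ : ℝ) (hδ : 0 < δ) :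
    ∃ F ∈ 𝓝 μ, limsup (fun n : ℕ => Real.log (NsepP f F n ε) / n) atTop ≤
      (∑ b : Fin q → A, Real.negMulLog ((μ : Measure X).real (wordSet f S b))) / q + 4 * δ := by
  classical
  have hmp : MeasurePreserving f (μ : Measure X) (μ : Measure X) := ⟨hf.measurable, hμ⟩
  have : Nonempty A := ⟨d (Classical.arbitrary X)⟩
  set m : (Fin q → A) → ℝ := fun b => (μ : Measure X).real (wordSet f S b) with hm
  set H := ∑ b, Real.negMulLog (m b) with hH
  have hm0 : ∀ b, 0 ≤ m b := fun b => measureReal_nonneg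
  have hms : ∑ b, m b ≤ 1 := wordSet_sum_le f hf.measurable _ S hS hdisj
  set B : ℝ := ((Fintype.card (Fin q → A) : ℕ) : ℝ) with hB
  have hB0 : 0 < B := by rw [hB]; exact_mod_cast Fintype.card_pos
  let p : (Fin q → A) → ℝ := fun b => (m b + δ / B) / (1 + δ)
  have hp : ∀ b, 0 < p b := fun b => by
    have := hm0 b
    positivity
  have hps : ∑ b, p b ≤ 1 := by
    simp only [p]
    rw [← Finset.sum_div, Finset.sum_add_distrib, div_le_one (by linarith)]
    simp only [Finset.sum_const, Finset.card_univ, nsmul_eq_mul, ← hB]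
    rw [mul_div_cancel₀ _ hB0.ne']
    linarith
  have hp1 : ∀ b, p b ≤ 1 := fun b =>
    (Finset.single_le_sum (fun i _ => (hp i).le) (Finset.mem_univ b)).trans hps
  let φ : (Fin q → A) → ℝ := fun b => -Real.log (p b)
  have hφ0 : ∀ b, 0 ≤ φ b := fun b => by
    have := Real.log_nonpos (hp b).le (hp1 b)
    simp only [φ]; linarith
  have hφm : ∀ b, φ b * m b ≤ Real.negMulLog (m b) + δ * m b := by
    intro b
    rcases (hm0 b).eq_or_lt with h | h
    · rw [← h]; simp
    · have h1 : m b / (1 + δ) ≤ p b := by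
        simp only [p]; gcongr; have : 0 < δ / B := by positivity
        linarith
      have h2 := Real.log_le_log (by positivity) h1
      rw [Real.log_div h.ne' (by linarith)] at h2
      have h3 := Real.log_le_sub_one_of_pos (show 0 < 1 + δ by linarith)
      have h4 : φ b ≤ -Real.log (m b) + δ := by simp only [φ]; linarith
      rw [Real.negMulLog]
      nlinarith
  set M := ∑ b, φ b with hMdef
  have hM0 : 0 ≤ M := Finset.sum_nonneg fun b _ => hφ0 b
  have hM : ∀ b, φ b ≤ M := fun b =>
    Finset.single_le_sum (fun i _ => hφ0 i) (Finset.mem_univ b)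
  have hA0 : (0 : ℝ) < Fintype.card A := by exact_mod_cast Fintype.card_pos
  have hq0 : (0 : ℝ) < q := by exact_mod_cast hq
  let γ : ℝ := δ / (q * Fintype.card A * (M + 1))
  have hγ0 : 0 < γ := by positivity
  have hKex : ∀ a, ∃ K, K ⊆ S a ∧ IsClosed K ∧ (μ : Measure X) (S a \ K) < ENNReal.ofReal γ :=
    fun a => (hS a).exists_isClosed_sdiff_lt (measure_ne_top _ _) (by simpa using hγ0)
  choose K hKS hKc hKμ using hKex
  have hKμ' : ∀ a, (μ : Measure X).real (S a \ K a) ≤ γ := fun a =>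
    ENNReal.toReal_le_of_le_ofReal hγ0.le (hKμ a).le
  obtain ⟨U, c, hU, hKU, hcU, hcd⟩ := exists_coding K hKc
    (fun a b hab => (hdisj hab).mono (hKS a) (hKS b)) ε
    (fun a => (Metric.diam_mono (hKS a) (isCompact_univ.isBounded.subset (subset_univ _))).trans_lt
      (hdiam a)) d (fun x => Set.subset_empty_iff.1 ((hKS _).trans (hd x).subset)) hd'
  obtain ⟨ψ, hψ1, hψ2⟩ := exists_psi f hf (μ : Measure X) q K U hKc hU hKU c hcU φ M hM
  have hge := wordSet_sum_ge f (μ : Measure X) hmp S K q (fun a => (hKc a).measurableSet) hcov γ hKμ'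
  have hψ3 : ∫ x, ψ x ∂(μ : Measure X) < H + 3 * δ := by
    have e1 : M + ∑ b, (φ b - M) * (μ : Measure X).real (wordSet f K b)
        = ∑ b, φ b * (μ : Measure X).real (wordSet f K b)
          + M * (1 - ∑ b : Fin q → A, (μ : Measure X).real (wordSet f K b)) := by
      simp only [sub_mul, Finset.sum_sub_distrib, ← Finset.mul_sum]; ring
    have e2 : ∑ b, φ b * (μ : Measure X).real (wordSet f K b) ≤ H + δ := by
      calc ∑ b, φ b * (μ : Measure X).real (wordSet f K b)
          ≤ ∑ b, (Real.negMulLog (m b) + δ * m b) := by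
            refine Finset.sum_le_sum fun b _ => le_trans ?_ (hφm b)
            exact mul_le_mul_of_nonneg_left
              (measureReal_mono fun x hx j => hKS _ (hx j)) (hφ0 b)
        _ = H + δ * ∑ b, m b := by rw [Finset.sum_add_distrib, ← Finset.mul_sum]
        _ ≤ H + δ := by nlinarith
    have e3 : M * (1 - ∑ b : Fin q → A, (μ : Measure X).real (wordSet f K b)) ≤ δ := by
      calc _ ≤ M * (q * (Fintype.card A * γ)) := by gcongr
        _ = M / (M + 1) * δ := by simp only [γ]; field_simp
        _ ≤ 1 * δ := by
          gcongr; rw [div_le_one (by linarith)]; linarith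
        _ = δ := one_mul _
    linarith
  let ψb : BoundedContinuousFunction X ℝ := BoundedContinuousFunction.mkOfCompact ψ
  refine ⟨{ν | ∫ x, ψb x ∂(ν : Measure X) < H + 3 * δ}, ?_, ?_⟩
  · exact (isOpen_lt (ProbabilityMeasure.continuous_integral_boundedContinuousFunction ψb)
      continuous_const).mem_nhds hψ3
  set F : Set (ProbabilityMeasure X) := {ν | ∫ x, ψb x ∂(ν : Measure X) < H + 3 * δ} with hF
  have hcount : ∀ n, 0 < n → (NsepP f F n ε : ℝ) ≤
      q * B ^ 2 * Real.exp (n * (H + 3 * δ) / q) := by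
    intro n hn
    have : NsepP f F n ε ≤ ⌊q * B ^ 2 * Real.exp (n * (H + 3 * δ) / q)⌋₊ := by
      refine csSup_le' ?_
      rintro k ⟨E, hE, hsep, rfl⟩
      refine Nat.le_floor ?_
      refine count_words f c q n hq p hp hps _ E ?_ ?_
      · intro x hx y hy hxy
        by_contra hne
        obtain ⟨i, hi, h⟩ := hsep x hx y hy hne
        exact absurd (hcd _ _ (hxy i hi)) (not_le.2 h)
      · intro x hx
        have h1 : ∫ y, ψb y ∂(empProb f x n : Measure X) < H + 3 * δ := hE hx
        have h2 : ∫ y, ψb y ∂(empProb f x n : Measure X)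
            = (n : ℝ)⁻¹ * ∑ i ∈ Finset.range n, ψ (f^[i] x) := by
          have hmx : max n 1 = n := by omega
          change ∫ y, ψb y ∂(empMeasure f x n) = _
          rw [empMeasure, hmx, integral_smul_measure, integral_finset_sum_measure]
          · simp [ψb]
          · intro i _
            exact integrable_dirac (by simp)
        rw [h2] at h1
        have hn0 : (0 : ℝ) < n := by exact_mod_cast hn
        rw [inv_mul_lt_iff₀ hn0] at h1
        rw [mul_div_cancel₀ _ hq0.ne']
        exact (Finset.sum_le_sum fun i _ => hψ1 (f^[i] x)).trans h1.le
    exact (Nat.cast_le.2 this).trans (Nat.floor_le (by positivity))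
  have hC0 : 0 < q * B ^ 2 := by positivity
  have hH0 : 0 ≤ H := Finset.sum_nonneg fun b _ =>
    Real.negMulLog_nonneg (hm0 b) measureReal_le_one
  have hlim : ∀ᶠ n : ℕ in atTop, |Real.log (q * B ^ 2)| / n ≤ δ := by
    have : Tendsto (fun n : ℕ => |Real.log (q * B ^ 2)| / n) atTop (𝓝 0) :=
      tendsto_const_div_atTop_nhds_zero_nat _
    filter_upwards [this.eventually (gt_mem_nhds hδ)] with n hn
    exact hn.le
  have hnn : ∀ n : ℕ, 0 ≤ Real.log (NsepP f F n ε) / n := fun n =>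
    div_nonneg (Real.log_natCast_nonneg _) (Nat.cast_nonneg _)
  refine limsup_le_of_le (isCoboundedUnder_le_of_le atTop (x := 0) hnn) ?_
  filter_upwards [hlim, eventually_gt_atTop 0] with n hn1 hn
  have hn0 : (0 : ℝ) < n := by exact_mod_cast hn
  have hq1 : (1 : ℝ) ≤ q := by exact_mod_cast hq
  have key : Real.log (NsepP f F n ε) ≤ |Real.log (q * B ^ 2)| + n * (H + 3 * δ) / q := by
    rcases Nat.eq_zero_or_pos (NsepP f F n ε) with h | h
    · rw [h]; simp; positivity
    · have := Real.log_le_log (by exact_mod_cast h) (hcount n hn)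
      rw [Real.log_mul hC0.ne' (Real.exp_pos _).ne', Real.log_exp] at this
      linarith [le_abs_self (Real.log (q * B ^ 2))]
  calc Real.log (NsepP f F n ε) / n
      ≤ (|Real.log (q * B ^ 2)| + n * (H + 3 * δ) / q) / n := by gcongr
    _ = |Real.log (q * B ^ 2)| / n + (H / q + 3 * δ / q) := by field_simp
    _ ≤ δ + (H / q + 3 * δ) := by
      gcongr; exact div_le_self (by positivity) hq1
    _ = _ := by ring

theorem wordSet_succ {X A : Type*} (f : X → X) (T : A → Set X) {n : ℕ} (b : Fin (n + 1) → A) :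
    wordSet f T b = T (b 0) ∩ f ⁻¹' wordSet f T (Fin.tail b) := by
  ext x
  simp only [wordSet, mem_setOf_eq, Fin.forall_fin_succ, mem_inter_iff, mem_preimage, Fin.tail,
    Fin.val_succ, Function.iterate_succ_apply, Fin.val_zero, Function.iterate_zero, id]

theorem dyn_mem {X A : Type*} (f : X → X) (T : A → Set X) (P : Finset (Set X)) :
    ∀ (n : ℕ) (b : Fin n → A), (∀ j, T (b j) ∈ P) → wordSet f T b ∈ dynJoin f P n := by
  classical
  intro n
  induction n with
  | zero => intro b _; simp [wordSet, dynJoin]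
  | succ n ih =>
    intro b hb
    rw [wordSet_succ]
    simp only [dynJoin, joinParts, Finset.mem_image, Finset.mem_product, Prod.exists]
    exact ⟨_, _, ⟨hb 0, _, ih (Fin.tail b) (fun j => hb j.succ), rfl⟩, rfl⟩

theorem dyn_exists {X A : Type*} (f : X → X) (T : A → Set X) (P : Finset (Set X))
    (hP : ∀ D ∈ P, ∃ a, T a = D) :
    ∀ (n : ℕ), ∀ D ∈ dynJoin f P n, ∃ b : Fin n → A, wordSet f T b = D := by
  classical
  intro n
  induction n with
  | zero => intro D hD; exact ⟨Fin.elim0, by simpa [wordSet, dynJoin, eq_comm] using hD⟩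
  | succ n ih =>
    intro D hD
    simp only [dynJoin, joinParts, Finset.mem_image, Finset.mem_product, Prod.exists] at hD
    obtain ⟨D1, D2, ⟨h1, D3, h3, rfl⟩, rfl⟩ := hD
    obtain ⟨a, rfl⟩ := hP D1 h1
    obtain ⟨b, rfl⟩ := ih D3 h3
    exact ⟨Fin.cons a b, by rw [wordSet_succ]; simp⟩

theorem wordSet_real_eq {X A : Type*} [MeasurableSpace X] (f : X → X)
    (μ : Measure X) [IsProbabilityMeasure μ] (hμ : MeasurePreserving f μ μ)
    (S T : A → Set X) (hST : ∀ a, S a ⊆ T a) (hnull : ∀ a, μ (T a \ S a) = 0)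
    {q : ℕ} (b : Fin q → A) : μ.real (wordSet f S b) = μ.real (wordSet f T b) := by
  have hsub : wordSet f S b ⊆ wordSet f T b := fun x hx j => hST _ (hx j)
  have h0 : μ (wordSet f T b \ wordSet f S b) = 0 := by
    have : wordSet f T b \ wordSet f S b ⊆ ⋃ j : Fin q, f^[j] ⁻¹' (T (b j) \ S (b j)) := by
      rintro x ⟨hx, hx'⟩
      simp only [wordSet, mem_setOf_eq, not_forall] at hx'
      obtain ⟨j, hj⟩ := hx'
      exact mem_iUnion.2 ⟨j, hx j, hj⟩
    refine measure_mono_null this (measure_iUnion_null fun j => ?_)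
    exact (hμ.iterate j).quasiMeasurePreserving.preimage_null (hnull _)
  rw [measureReal_def, measureReal_def]
  congr 1
  refine le_antisymm (measure_mono hsub) ?_
  calc μ (wordSet f T b) ≤ μ (wordSet f S b ∪ (wordSet f T b \ wordSet f S b)) := by
        refine measure_mono fun x hx => ?_
        by_cases h : x ∈ wordSet f S b
        · exact Or.inl h
        · exact Or.inr ⟨hx, h⟩
    _ ≤ _ := measure_union_le _ _
    _ = _ := by rw [h0, add_zero]

theorem words_le_partEnt {X A : Type*} [MeasurableSpace X] [Fintype A] (f : X → X)
    (μ : Measure X) [IsProbabilityMeasure μ] (hμ : MeasurePreserving f μ μ)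
    (S T : A → Set X) (hST : ∀ a, S a ⊆ T a) (hnull : ∀ a, μ (T a \ S a) = 0)
    (hd : ∀ a b, a ≠ b → Disjoint (S a) (T b)) (P : Finset (Set X))
    (hP : ∀ a, (S a).Nonempty → T a ∈ P) (q : ℕ) :
    ∑ b : Fin q → A, Real.negMulLog (μ.real (wordSet f S b)) ≤ partEnt μ (dynJoin f P q) := by
  classical
  have hne : ∀ b : Fin q → A, μ.real (wordSet f S b) ≠ 0 → (wordSet f S b).Nonempty := by
    intro b hb
    by_contra h
    rw [not_nonempty_iff_eq_empty] at h
    simp [h] at hb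
  let G : Finset (Fin q → A) := Finset.univ.filter fun b => μ.real (wordSet f S b) ≠ 0
  have h1 : ∑ b : Fin q → A, Real.negMulLog (μ.real (wordSet f S b))
      = ∑ b ∈ G, Real.negMulLog (μ.real (wordSet f T b)) := by
    rw [Finset.sum_filter]
    refine Finset.sum_congr rfl fun b _ => ?_
    split_ifs with h
    · rw [wordSet_real_eq f μ hμ S T hST hnull]
    · push Not at h
      rw [h]; simp
  have hinj : Set.InjOn (fun b : Fin q → A => wordSet f T b) G := by
    intro b hb b' hb' h
    simp only at h
    by_contra hbb
    obtain ⟨j, hj⟩ := Function.ne_iff.1 hbb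
    obtain ⟨x, hx⟩ := hne b (by simpa [G] using hb)
    have hx' : x ∈ wordSet f T b' := h ▸ (fun i => hST _ (hx i))
    exact Set.disjoint_left.1 (hd _ _ hj) (hx j) (hx' j)
  rw [h1, partEnt]
  calc ∑ b ∈ G, Real.negMulLog (μ.real (wordSet f T b))
      = ∑ D ∈ G.image (fun b => wordSet f T b), Real.negMulLog (μ.real D) :=
        by rw [Finset.sum_image hinj]
    _ ≤ _ := by
      refine Finset.sum_le_sum_of_subset_of_nonneg ?_
        fun D _ _ => Real.negMulLog_nonneg measureReal_nonneg measureReal_le_one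
      intro D hD
      obtain ⟨b, hb, rfl⟩ := Finset.mem_image.1 hD
      obtain ⟨x, hx⟩ := hne b (by simpa [G] using hb)
      exact dyn_mem f T P q b fun j => hP _ ⟨_, hx j⟩

theorem partEnt_bound {X A : Type*} [MeasurableSpace X] [Fintype A] [Nonempty A] (f : X → X)
    (μ : Measure X) [IsProbabilityMeasure μ] (hμ : MeasurePreserving f μ μ)
    (S T : A → Set X) (hST : ∀ a, S a ⊆ T a) (hnull : ∀ a, μ (T a \ S a) = 0)
    (hS : ∀ a, MeasurableSet (S a))
    (hdisj : Pairwise fun a b => Disjoint (S a) (S b)) (P : Finset (Set X))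
    (hP : ∀ D ∈ P, ∃ a, T a = D) (n : ℕ) :
    partEnt μ (dynJoin f P n) ≤ n * Real.log (Fintype.card A) + 1 := by
  classical
  have hex := dyn_exists f T P hP n
  choose! s hs using hex
  have hinj : Set.InjOn s (dynJoin f P n) := fun D hD D' hD' h => by
    rw [← hs D hD, ← hs D' hD', h]
  set N : ℝ := ((Fintype.card (Fin n → A) : ℕ) : ℝ) with hN
  have hN1 : 1 ≤ N := by rw [hN]; exact_mod_cast Fintype.card_pos
  have hsum := wordSet_sum_le (q := n) f hμ.measurable μ S hS hdisj
  have hNl : Real.log N = n * Real.log (Fintype.card A) := by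
    rw [hN]; simp
  have hterm : ∀ p : ℝ, 0 ≤ p → Real.negMulLog p ≤ p * Real.log N + 1 / N - p := by
    intro p hp
    rcases hp.eq_or_lt with h | h
    · rw [← h]; simp; linarith
    · have h1 := Real.log_le_sub_one_of_pos (show 0 < 1 / (p * N) by positivity)
      rw [one_div, Real.log_inv, Real.log_mul h.ne' (by linarith)] at h1
      have h2 : p * (p * N)⁻¹ = 1 / N := by field_simp
      rw [Real.negMulLog]
      nlinarith
  calc partEnt μ (dynJoin f P n)
      = ∑ D ∈ dynJoin f P n, Real.negMulLog (μ.real (wordSet f T (s D))) := by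
        rw [partEnt]
        refine Finset.sum_congr rfl fun D hD => ?_
        rw [hs D hD]; rfl
    _ = ∑ b ∈ (dynJoin f P n).image s, Real.negMulLog (μ.real (wordSet f T b)) :=
        by rw [Finset.sum_image hinj]
    _ ≤ ∑ b, Real.negMulLog (μ.real (wordSet f T b)) :=
        Finset.sum_le_sum_of_subset_of_nonneg (Finset.subset_univ _)
          fun D _ _ => Real.negMulLog_nonneg measureReal_nonneg measureReal_le_one
    _ = ∑ b : Fin n → A, Real.negMulLog (μ.real (wordSet f S b)) := by
        refine Finset.sum_congr rfl fun b _ => ?_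
        rw [wordSet_real_eq f μ hμ S T hST hnull]
    _ ≤ ∑ b : Fin n → A, (μ.real (wordSet f S b) * Real.log N + 1 / N - μ.real (wordSet f S b)) :=
        Finset.sum_le_sum fun b _ => hterm _ measureReal_nonneg
    _ = (∑ b : Fin n → A, μ.real (wordSet f S b)) * Real.log N + 1
        - ∑ b : Fin n → A, μ.real (wordSet f S b) := by
        rw [Finset.sum_sub_distrib, Finset.sum_add_distrib, ← Finset.sum_mul]
        simp only [Finset.sum_const, Finset.card_univ, nsmul_eq_mul, ← hN]
        rw [mul_one_div_cancel (by linarith)]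
    _ ≤ 1 * Real.log N + 1 - 0 := by
        have := Real.log_nonneg hN1
        gcongr
        exact Finset.sum_nonneg fun b _ => measureReal_nonneg
    _ = _ := by rw [hNl]; ring

theorem exists_partition {X : Type*} [MetricSpace X] [CompactSpace X]
    [MeasurableSpace X] [BorelSpace X] (μ : Measure X) (ε : ℝ) (hε : 0 < ε) (t : Finset X)
    (ht : ∀ x, ∃ y ∈ t, dist x y < ε / 3) :
    ∃ P : Finset (Set X), IsPartition μ P ∧ partDiamLt P ε := by
  classical
  let at' : Finset X → Set X := fun s => {x | ∀ y ∈ t, dist x y < ε / 3 ↔ y ∈ s}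
  have hm : ∀ s, MeasurableSet (at' s) := by
    intro s
    have : at' s = ⋂ y ∈ t, {x | dist x y < ε / 3 ↔ y ∈ s} := by ext; simp [at']
    rw [this]
    refine Finset.measurableSet_biInter _ fun y _ => ?_
    have hb : MeasurableSet {x | dist x y < ε / 3} := (Metric.isOpen_ball (x := y)).measurableSet
    by_cases h : y ∈ s
    · simpa [h] using hb
    · simp only [h, iff_false]
      exact hb.compl
  refine ⟨t.powerset.image at', ⟨?_, ?_, ?_⟩, ?_⟩
  · intro D hD
    obtain ⟨s, _, rfl⟩ := Finset.mem_image.1 hD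
    exact hm s
  · have : (⋃ D ∈ t.powerset.image at', D) = univ := by
      refine eq_univ_of_forall fun x => ?_
      simp only [mem_iUnion]
      refine ⟨at' (t.filter fun y => dist x y < ε / 3), Finset.mem_image_of_mem _ (by simp), ?_⟩
      intro y hy
      simp [hy]
    rw [this]; simp
  · intro D hD D' hD' hne
    obtain ⟨s, hs, rfl⟩ := Finset.mem_image.1 hD
    obtain ⟨s', hs', rfl⟩ := Finset.mem_image.1 hD'
    have : at' s ∩ at' s' = ∅ := by
      refine eq_empty_of_forall_notMem fun x hx => hne ?_
      have : s = s' := by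
        ext y
        constructor
        · intro hy
          have hyt := Finset.mem_powerset.1 hs hy
          exact (hx.2 y hyt).1 ((hx.1 y hyt).2 hy)
        · intro hy
          have hyt := Finset.mem_powerset.1 hs' hy
          exact (hx.1 y hyt).1 ((hx.2 y hyt).2 hy)
      rw [this]
    rw [this]; simp
  · intro D hD
    obtain ⟨s, _, rfl⟩ := Finset.mem_image.1 hD
    have : Metric.diam (at' s) ≤ 2 * (ε / 3) := by
      refine Metric.diam_le_of_forall_dist_le (by positivity) fun x hx x' hx' => ?_
      obtain ⟨y, hy, hxy⟩ := ht x
      have h2 := (hx' y hy).2 ((hx y hy).1 hxy)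
      have := dist_triangle_right x x' y
      linarith
    linarith

theorem stmt11 {X : Type*} [MetricSpace X] [CompactSpace X] [Nonempty X]
    [MeasurableSpace X] [BorelSpace X]
    (f : X → X) (hf : Continuous f) (μ : ProbabilityMeasure X) (hμ : InvariantProb f μ)
    (ε : ℝ) (hε : 0 < ε) :
    sInf ((fun F => limsup (fun n : ℕ => Real.log (NsepP f F n ε) / n) atTop) ''
        {F : Set (ProbabilityMeasure X) | F ∈ 𝓝 μ}) ≤
      infEnt (μ : Measure X) f ε := by
  classical
  obtain ⟨t, ht⟩ : ∃ t : Finset X, ∀ x, ∃ y ∈ t, dist x y < ε / 3 := by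
    obtain ⟨t, ht⟩ := isCompact_univ.elim_finite_subcover (fun y : X => Metric.ball y (ε / 3))
      (fun y => Metric.isOpen_ball)
      (fun x _ => mem_iUnion.2 ⟨x, Metric.mem_ball_self (by positivity)⟩)
    refine ⟨t, fun x => ?_⟩
    simpa using ht (mem_univ x)
  obtain ⟨P₀, hP₀⟩ := exists_partition (μ : Measure X) ε hε t ht
  refine le_csInf ⟨_, P₀, hP₀, rfl⟩ ?_
  rintro _ ⟨P, ⟨⟨hPm, hPc, hPd⟩, hPε⟩, rfl⟩
  have hmp : MeasurePreserving f (μ : Measure X) (μ : Measure X) := ⟨hf.measurable, hμ⟩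
  choose e het hed using ht
  let A := {D : Set X // D ∈ P} ⊕ {y : X // y ∈ t}
  let T : A → Set X := Sum.elim (fun D => D.1) (fun _ => ∅)
  let S : A → Set X := Sum.elim (fun D => D.1 \ ⋃ D' ∈ P.erase D.1, D') (fun _ => ∅)
  let d : X → A := fun x => Sum.inr ⟨e x, het x⟩
  have : Nonempty A := ⟨d (Classical.arbitrary X)⟩
  have hST : ∀ a, S a ⊆ T a := by
    rintro (D | y)
    · exact sdiff_subset
    · exact subset_rfl
  have hSm : ∀ a, MeasurableSet (S a) := by
    rintro (D | y)
    · exact (hPm _ D.2).diff (Finset.measurableSet_biUnion _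
        fun D' hD' => hPm _ (Finset.mem_of_mem_erase hD'))
    · exact MeasurableSet.empty
  have hnull : ∀ a, (μ : Measure X) (T a \ S a) = 0 := by
    rintro (D | y)
    · have : D.1 \ (D.1 \ ⋃ D' ∈ P.erase D.1, D') ⊆ ⋃ D' ∈ P.erase D.1, D.1 ∩ D' := by
        intro x hx
        have h1 : x ∈ ⋃ D' ∈ P.erase D.1, D' := by
          by_contra h
          exact hx.2 ⟨hx.1, h⟩
        simp only [mem_iUnion] at h1 ⊢
        obtain ⟨D', hD', hxD⟩ := h1
        exact ⟨D', hD', hx.1, hxD⟩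
      refine measure_mono_null this ?_
      refine (measure_biUnion_null_iff (Finset.countable_toSet _)).2 fun D' hD' => ?_
      have hD'' : D' ∈ P.erase D.1 := hD'
      exact hPd _ D.2 _ (Finset.mem_of_mem_erase hD'') (Finset.ne_of_mem_erase hD'').symm
    · simp [T]
  have hd : ∀ a b, a ≠ b → Disjoint (S a) (T b) := by
    rintro (D | y) (D' | y') hne
    · refine Set.disjoint_left.2 fun x hx hx' => hx.2 ?_
      simp only [mem_iUnion]
      exact ⟨D'.1, Finset.mem_erase.2 ⟨fun h => hne (by rw [Subtype.ext h]), D'.2⟩, hx'⟩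
    all_goals simp [S, T]
  have hdisj : Pairwise fun a b => Disjoint (S a) (S b) := fun a b hab =>
    (hd a b hab).mono_right (hST b)
  have hcov : (μ : Measure X).real (⋃ a, S a)ᶜ = 0 := by
    rw [measureReal_def, ENNReal.toReal_eq_zero_iff]
    left
    have : (⋃ a, S a)ᶜ ⊆ (univ \ ⋃ D ∈ P, D) ∪ ⋃ a, (T a \ S a) := by
      intro x hx
      by_cases h : x ∈ ⋃ D ∈ P, D
      · right
        simp only [mem_iUnion] at h
        obtain ⟨D, hD, hxD⟩ := h
        exact mem_iUnion.2 ⟨Sum.inl ⟨D, hD⟩, hxD, fun h' => hx (mem_iUnion.2 ⟨_, h'⟩)⟩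
      · left; exact ⟨mem_univ _, h⟩
    exact measure_mono_null this (measure_union_null hPc (measure_iUnion_null hnull))
  have hdiam : ∀ a, Metric.diam (S a) < ε := by
    rintro (D | y)
    · exact (Metric.diam_mono (hST (Sum.inl D))
        (isCompact_univ.isBounded.subset (subset_univ _))).trans_lt (hPε _ D.2)
    · simpa [S] using hε
  have hP1 : ∀ D ∈ P, ∃ a, T a = D := fun D hD => ⟨Sum.inl ⟨D, hD⟩, rfl⟩
  have hP2 : ∀ a, (S a).Nonempty → T a ∈ P := by
    rintro (D | y) h
    · exact D.2
    · simp [S] at h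
  have hbd : IsBoundedUnder (· ≤ ·) atTop
      (fun n : ℕ => partEnt (μ : Measure X) (dynJoin f P n) / n) := by
    refine isBoundedUnder_of_eventually_le (a := Real.log (Fintype.card A) + 1) ?_
    filter_upwards [eventually_gt_atTop 0] with n hn
    have hn1 : (1 : ℝ) ≤ n := by exact_mod_cast hn
    have := partEnt_bound f (μ : Measure X) hmp S T hST hnull hSm hdisj P hP1 n
    rw [div_le_iff₀ (by linarith)]
    nlinarith
  refine le_of_forall_pos_le_add fun δ hδ => ?_
  have hev : ∀ᶠ n : ℕ in atTop, partEnt (μ : Measure X) (dynJoin f P n) / n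
      < dynEnt (μ : Measure X) f P + δ / 5 :=
    eventually_lt_of_limsup_lt (show limsup _ _ < _ from lt_add_of_pos_right _ (by positivity)) hbd
  obtain ⟨q, hq1, hq⟩ := (hev.and (eventually_gt_atTop 0)).exists
  obtain ⟨F, hF, hlim⟩ := main_est f hf μ hμ ε S hSm hdisj hcov hdiam d (fun x => rfl)
    (fun x y hxy => by
      have h : e x = e y := congrArg Subtype.val (Sum.inr.inj hxy)
      have h1 := hed x
      have h2 := hed y
      rw [← h] at h2
      have := dist_triangle_right x y (e x)
      linarith) q hq (δ / 5) (by positivity)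
  have hle := words_le_partEnt f (μ : Measure X) hmp S T hST hnull hd P hP2 q
  have hbb : BddBelow ((fun F => limsup (fun n : ℕ => Real.log (NsepP f F n ε) / n) atTop) ''
        {F : Set (ProbabilityMeasure X) | F ∈ 𝓝 μ}) := by
    refine ⟨0, ?_⟩
    rintro _ ⟨F, _, rfl⟩
    exact real_limsup_nonneg _ fun n =>
      div_nonneg (Real.log_natCast_nonneg _) (Nat.cast_nonneg _)
  refine (csInf_le hbb ⟨F, hF, rfl⟩).trans (hlim.trans ?_)
  have hq0 : (0 : ℝ) < q := by exact_mod_cast hq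
  have := div_le_div_of_nonneg_right hle hq0.le
  linarith

end
end
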